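/- arXiv:1709.03335 — 2 statements merged into one kernel-verified Lean document; each statement's English description precedes it below -/
import Mathlib

section
/- Let s ≥ 2 and let G = P'_{8·3^s} be the generalized binary tetrahedral group. The group cohomology of G with coefficients in the trivial G-module ℤ is: H⁰(G; ℤ) ≅ ℤ; Hⁿ(G; ℤ) ≅ ℤ/(8·3^s)ℤ for n > 0 with n ≡ 0 (mod 4); Hⁿ(G; ℤ) = 0 for n odd; and Hⁿ(G; ℤ) ≅ ℤ/3^sℤ for n ≡ 2 (mod 4). -/
/-- Generators of the generalized binary tetrahedral group. -/
inductive Gen : Type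
  | p : Gen
  | q : Gen
  | z : Gen

/-- The relations of the presentation
`⟨p, q, z | p² = (pq)² = q², z p z⁻¹ = q, z q z⁻¹ = pq, z^{3^s} = 1⟩`. -/
def rels (s : ℕ) : Set (FreeGroup Gen) :=
  {FreeGroup.of Gen.p ^ 2 * (FreeGroup.of Gen.q ^ 2)⁻¹,
   (FreeGroup.of Gen.p * FreeGroup.of Gen.q) ^ 2 * (FreeGroup.of Gen.q ^ 2)⁻¹,
   FreeGroup.of Gen.z * FreeGroup.of Gen.p * (FreeGroup.of Gen.z)⁻¹ *
     (FreeGroup.of Gen.q)⁻¹,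
   FreeGroup.of Gen.z * FreeGroup.of Gen.q * (FreeGroup.of Gen.z)⁻¹ *
     (FreeGroup.of Gen.p * FreeGroup.of Gen.q)⁻¹,
   FreeGroup.of Gen.z ^ (3 ^ s)}

structure PData (G : Type) [Group G] (T u : G) (b : ℕ) : Prop where
  h1 : u ^ 3 = T ^ 3
  h2 : (T ^ b * u) ^ 2 = T ^ 3
  gen : Subgroup.closure {T, u} = ⊤
  gen' : Subgroup.closure {T ^ b, u} = ⊤
  univ : ∀ (H : Type) [Group H] (T' u' : H), u' ^ 3 = T' ^ 3 → (T' ^ b * u') ^ 2 = T' ^ 3 →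
    ∃ φ : G →* H, φ T = T' ∧ φ u = u'

theorem q8_aux {H : Type} [Group H] (p q : H) (h1 : p ^ 2 = q ^ 2) (h2 : (p * q) ^ 2 = q ^ 2) :
    p * q * p = q ∧ q * p * q = p ∧ (p ^ 2) ^ 2 = 1 := by
  have a1 : p * q * p = q := by
    have : p * q * p * q = q * q := by simpa [pow_two, mul_assoc] using h2
    exact mul_right_cancel this
  have a2 : q * p * q = p := by
    have : p * (q * p * q) = p * p := by
      rw [← pow_two p, h1, ← h2]; simp [pow_two, mul_assoc]
    exact mul_left_cancel this
  refine ⟨a1, a2, ?_⟩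
  -- p q p = q, so p q² p = q p · ... 
  have a3 : p ^ 2 * q = q * p ^ 2 := by rw [h1]; group
  have a5 : p ^ 2 * q * p ^ 2 = q := by
    calc p ^ 2 * q * p ^ 2 = p * (p * q * p) * p := by simp only [pow_two, mul_assoc]
      _ = q := by rw [a1, a1]
  rw [a3, mul_assoc, ← pow_two] at a5
  simpa using a5

/-- From the two-generator presentation to the given one. -/
theorem grp_A {H : Type} [Group H] (T u : H) (j : ℕ)
    (h1 : u ^ 3 = T ^ 3) (h2 : (T ^ (3 * j + 2) * u) ^ 2 = T ^ 3) :
    ∃ p q z : H, p ^ 2 = q ^ 2 ∧ (p * q) ^ 2 = q ^ 2 ∧ z * p * z⁻¹ = q ∧ z * q * z⁻¹ = p * q ∧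
      z ^ (9 * (2 * j + 1)) = 1 ∧ p ^ 2 * z = T ∧ q * z ^ (6 * j + 4) = u := by
  obtain ⟨h, hh⟩ : ∃ h, h = T ^ 3 := ⟨_, rfl⟩
  have cT : Commute h T := by rw [hh]; exact (Commute.refl T).pow_left 3
  have cu : Commute h u := by rw [hh, ← h1]; exact (Commute.refl u).pow_left 3
  obtain ⟨x, hx⟩ : ∃ x, x = T ^ (3 * j + 2) * u := ⟨_, rfl⟩
  have cx : Commute h x := by rw [hx]; exact (cT.pow_right _).mul_right cu
  have x2 : x * x = h := by rw [hx, hh, ← pow_two, h2]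
  obtain ⟨p, hp⟩ : ∃ p, p = x * h ^ (-(3 * j + 2 : ℤ)) := ⟨_, rfl⟩
  obtain ⟨d, hd⟩ : ∃ d, d = h ^ (-(6 * j + 3 : ℤ)) := ⟨_, rfl⟩
  have cp : Commute h p := by rw [hp]; exact cx.mul_right ((Commute.refl h).zpow_right _)
  have dT : Commute d T := by rw [hd]; exact cT.zpow_left _
  have dp : Commute d p := by rw [hd]; exact cp.zpow_left _
  have p2 : p * p = d := by
    rw [hp, mul_assoc, ← mul_assoc (h ^ _) x, ← (cx.symm.zpow_right _).eq, mul_assoc, ← mul_assoc x,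
      x2, ← zpow_add, ← zpow_one_add, hd]
    congr 1; ring
  have hu : T * p = u * h ^ (-(2 * j + 1 : ℤ)) := by
    have : T * x = h ^ (j + 1) * u := by
      rw [hx, hh, ← mul_assoc, ← pow_succ', ← pow_mul]; congr 2
    rw [hp, ← mul_assoc, this, ((cu.pow_left _).eq), mul_assoc, ← zpow_natCast, ← zpow_add]
    congr 2; push_cast; ring
  have k1 : (T * p) ^ 3 = h * d := by
    rw [hu, ((cu.symm.zpow_right _)).mul_pow, h1, ← hh, hd, ← zpow_natCast, ← zpow_mul]
    congr 2; push_cast; ring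
  -- p2 p3 p1 = d
  obtain ⟨q, hq⟩ : ∃ q, q = T * p * T⁻¹ := ⟨_, rfl⟩
  obtain ⟨r, hr⟩ : ∃ r, r = T * q * T⁻¹ := ⟨_, rfl⟩
  have k2 : q * r * p = d := by
    have e : (T * p) ^ 3 = q * r * (T ^ 3) * p := by rw [hr, hq]; simp [pow_succ, mul_assoc]
    rw [e, ← hh, mul_assoc (q * r), cp.eq, ← mul_assoc, hd, ← zpow_one_add,
      add_comm, zpow_add_one] at k1
    rw [hd]; exact mul_right_cancel k1
  have q2 : q * q = d := by
    have : q * q = T * (p * p) * T⁻¹ := by rw [hq]; group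
    rw [this, p2, ← dT.eq]; group
  have r2 : r * r = d := by
    have : r * r = T * (q * q) * T⁻¹ := by rw [hr]; group
    rw [this, q2, ← dT.eq]; group
  have dq : Commute d q := by rw [← q2]; exact (Commute.refl q).mul_left (Commute.refl q)
  have dr : Commute d r := by rw [← r2]; exact (Commute.refl r).mul_left (Commute.refl r)
  have hT3r : T * r * T⁻¹ = p := by
    have : T * r * T⁻¹ = T ^ 3 * p * (T ^ 3)⁻¹ := by rw [hr, hq]; simp [pow_succ, mul_assoc]
    rw [this, ← hh, cp.eq]; group
  have k3 : p * q * r = d := by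
    have h5 : T * (T * (q * r * p) * T⁻¹) * T⁻¹
      = (T * (T * q * T⁻¹) * T⁻¹) * (T * (T * r * T⁻¹) * T⁻¹) * (T * (T * p * T⁻¹) * T⁻¹) := by group
    rw [k2, ← hr, hT3r, ← hq, ← hr, ← dT.eq, mul_inv_cancel_right, ← dT.eq, mul_inv_cancel_right] at h5
    exact h5.symm
  have e1 : p * q = d * r⁻¹ := by rw [← k3]; group
  have e2 : r⁻¹ = r * d⁻¹ := by rw [← r2]; group
  have e3 : p * q = r := by rw [e1, e2, ← dr.inv_left.eq, mul_inv_cancel_left]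
  have d2 : d ^ 2 = 1 := by
    have := (q8_aux p q (by rw [pow_two, pow_two, p2, q2]) (by rw [e3, pow_two, pow_two, r2, q2])).2.2
    rwa [pow_two p, p2] at this
  have dd : d⁻¹ = d := by
    rw [inv_eq_iff_mul_eq_one, ← pow_two, d2]
  have conj : ∀ y, Commute d y → (d * T) * y * (d * T)⁻¹ = T * y * T⁻¹ := by
    intro y hy
    have hc : Commute d (T * y * T⁻¹) := (dT.mul_right hy).mul_right dT.inv_right
    have : (d * T) * y * (d * T)⁻¹ = d * (T * y * T⁻¹) * d⁻¹ := by simp [mul_assoc]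
    rw [this, hc.eq, mul_inv_cancel_right]
  refine ⟨p, q, d * T, by rw [pow_two, pow_two, p2, q2], by rw [e3, pow_two, pow_two, r2, q2],
    by rw [conj p dp, hq], by rw [conj q dq, e3, hr], ?_, ?_, ?_⟩
  · have t : T ^ (9 * (2 * j + 1)) = d⁻¹ := by
      have : 9 * (2 * j + 1) = 3 * (6 * j + 3) := by ring
      rw [this, pow_mul, ← hh, hd, zpow_neg, inv_inv, ← zpow_natCast]; congr 1
    have : 9 * (2 * j + 1) = 2 * (9 * j + 4) + 1 := by ring
    rw [dT.mul_pow, t, this, pow_succ, pow_mul, d2, one_pow, one_mul, mul_inv_cancel]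
  · rw [pow_two, p2, ← mul_assoc, ← pow_two, d2, one_mul]
  · have t : T ^ (6 * j + 4) = T * h ^ (2 * j + 1) := by
      rw [hh, ← pow_mul, ← pow_succ']; congr 1; ring
    have t2 : d ^ (6 * j + 4) = 1 := by
      have : 6 * j + 4 = 2 * (3 * j + 2) := by ring
      rw [this, pow_mul, d2, one_pow]
    rw [dT.mul_pow, t2, one_mul, t, hq, ← mul_assoc, inv_mul_cancel_right, hu, mul_assoc,
      ← zpow_natCast, ← zpow_add]
    simp

theorem grp_B {G : Type} [Group G] (p q z : G) (j : ℕ)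
    (r1 : p ^ 2 = q ^ 2) (r2 : (p * q) ^ 2 = q ^ 2) (r3 : z * p * z⁻¹ = q)
    (r4 : z * q * z⁻¹ = p * q) (r5 : z ^ (9 * (2 * j + 1)) = 1) :
    (q * z ^ (6 * j + 4)) ^ 3 = (p ^ 2 * z) ^ 3 ∧
    ((p ^ 2 * z) ^ (3 * j + 2) * (q * z ^ (6 * j + 4))) ^ 2 = (p ^ 2 * z) ^ 3 := by
  obtain ⟨a1, a2, a3⟩ := q8_aux p q r1 r2
  obtain ⟨c, hc⟩ : ∃ c, c = p ^ 2 := ⟨_, rfl⟩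
  rw [← hc] at a3 ⊢
  have zp : z * p = q * z := by rw [← r3]; group
  have zq : z * q = p * q * z := by rw [← r4]; group
  have cp : Commute c p := by rw [hc]; exact (Commute.refl p).pow_left 2
  have cq : Commute c q := by rw [hc, r1]; exact (Commute.refl q).pow_left 2
  have cz : Commute c z := by
    have : z * c * z⁻¹ = c := by
      have : z * c * z⁻¹ = (z * p * z⁻¹) ^ 2 := by rw [hc]; simp [pow_succ, mul_assoc]
      rw [this, r3, ← r1, hc]
    have : z * c = c * z := by nth_rw 2 [← this]; group
    exact this.symm
  have z2q : z ^ 2 * q = p * z ^ 2 := by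
    rw [pow_two, mul_assoc, zq, ← mul_assoc, ← mul_assoc, zp, mul_assoc q, zq, ← mul_assoc, ← mul_assoc, a2,
      mul_assoc]
  have z3q : Commute (z ^ 3) q := by
    show z ^ 3 * q = q * z ^ 3
    rw [pow_succ', mul_assoc, z2q, ← mul_assoc, zp, mul_assoc]
  have z3p : Commute (z ^ 3) p := by
    have : z ^ 3 * p = p * z ^ 3 := by
      rw [pow_succ, mul_assoc, zp, ← mul_assoc, z2q, mul_assoc]
    exact this
  obtain ⟨k, hk⟩ : ∃ k, k = z ^ 3 := ⟨_, rfl⟩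
  rw [← hk] at z3q z3p
  have kz : Commute k z := by rw [hk]; exact (Commute.refl z).pow_left 3
  have k1 : k ^ (3 * (2 * j + 1)) = 1 := by rw [hk, ← pow_mul, ← r5]; congr 1; ring
  have T3 : (c * z) ^ 3 = c * k := by
    rw [cz.mul_pow, hk, pow_succ, a3, one_mul]
  have e1 : z ^ (6 * j + 4) = z * k ^ (2 * j + 1) := by
    rw [hk, ← pow_mul, ← pow_succ']; congr 1; ring
  have qz3 : (q * z) ^ 3 = c * k := by
    have : (q * z) ^ 3 = q * (z * q) * (z * q) * z := by simp [pow_succ, mul_assoc]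
    rw [this, zq]
    have : q * (p * q * z) * (p * q * z) * z = (q * p * q) * (z * p) * q * z ^ 2 := by
      simp [pow_succ, mul_assoc]
    rw [this, a2, zp]
    have : p * (q * z) * q * z ^ 2 = p * q * (z * q) * z ^ 2 := by simp [mul_assoc]
    rw [this, zq]
    have : p * q * (p * q * z) * z ^ 2 = (p * q) ^ 2 * z ^ 3 := by simp [pow_succ, mul_assoc]
    rw [this, r2, ← r1, hc, hk]
  have b1 : (q * z ^ (6 * j + 4)) ^ 3 = c * k := by
    rw [e1, ← mul_assoc, ((z3q.mul_right kz).symm.pow_right _).mul_pow, qz3, ← pow_mul, mul_comm _ 3, k1, mul_one]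
  refine ⟨by rw [b1, T3], ?_⟩
  have e2 : (c * z) ^ (3 * j + 2) * (q * z ^ (6 * j + 4)) = (c ^ (3 * j + 2) * k ^ (3 * j + 2)) * p := by
    have e3 : (c * z) ^ (3 * j + 2) = c ^ (3 * j + 2) * (k ^ j * z ^ 2) := by
      rw [cz.mul_pow, hk, ← pow_mul, ← pow_add]
    have e4 : z ^ 2 * z ^ (6 * j + 4) = k ^ (2 * j + 2) := by
      rw [hk, ← pow_mul, ← pow_add]; congr 1; ring
    rw [e3]
    have : c ^ (3 * j + 2) * (k ^ j * z ^ 2) * (q * z ^ (6 * j + 4)) =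
      c ^ (3 * j + 2) * (k ^ j * ((z ^ 2 * q) * z ^ (6 * j + 4))) := by simp only [mul_assoc]
    rw [this, z2q, mul_assoc p, e4, ← (z3p.pow_left _).eq, ← mul_assoc (k ^ j), ← pow_add, ← mul_assoc]
    congr 3; ring
  have ck : Commute c k := by rw [hk]; exact cz.pow_right 3
  rw [e2, ((cp.pow_left _).mul_left (z3p.pow_left _)).mul_pow, (ck.pow_pow _ _).mul_pow, ← hc, T3, ← pow_mul,
    ← pow_mul, mul_comm _ 2, pow_mul, a3, one_pow, one_mul]
  have : 2 * (3 * j + 2) = 3 * (2 * j + 1) + 1 := by ring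
  rw [this, pow_succ, k1, one_mul, ck.eq]

theorem pg_rels (s : ℕ) (p q z : PresentedGroup (rels s))
    (hp : p = PresentedGroup.of Gen.p) (hq : q = PresentedGroup.of Gen.q)
    (hz : z = PresentedGroup.of Gen.z) :
    p ^ 2 = q ^ 2 ∧ (p * q) ^ 2 = q ^ 2 ∧ z * p * z⁻¹ = q ∧ z * q * z⁻¹ = p * q ∧
      z ^ (3 ^ s) = 1 := by
  have key : ∀ r ∈ rels s, PresentedGroup.mk (rels s) r = 1 := fun r hr =>
    PresentedGroup.one_of_mem hr
  have e1 : p = PresentedGroup.mk (rels s) (FreeGroup.of Gen.p) := hp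
  have e2 : q = PresentedGroup.mk (rels s) (FreeGroup.of Gen.q) := hq
  have e3 : z = PresentedGroup.mk (rels s) (FreeGroup.of Gen.z) := hz
  refine ⟨?_, ?_, ?_, ?_, ?_⟩
  · have := key _ (show FreeGroup.of Gen.p ^ 2 * (FreeGroup.of Gen.q ^ 2)⁻¹ ∈ rels s by simp [rels])
    simp only [map_mul, map_inv, map_pow, ← e1, ← e2] at this
    exact mul_inv_eq_one.mp this
  · have := key _ (show (FreeGroup.of Gen.p * FreeGroup.of Gen.q) ^ 2 *
      (FreeGroup.of Gen.q ^ 2)⁻¹ ∈ rels s by simp [rels])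
    simp only [map_mul, map_inv, map_pow, ← e1, ← e2] at this
    exact mul_inv_eq_one.mp this
  · have := key _ (show FreeGroup.of Gen.z * FreeGroup.of Gen.p * (FreeGroup.of Gen.z)⁻¹ *
     (FreeGroup.of Gen.q)⁻¹ ∈ rels s by simp [rels])
    simp only [map_mul, map_inv, ← e1, ← e2, ← e3] at this
    exact mul_inv_eq_one.mp this
  · have := key _ (show FreeGroup.of Gen.z * FreeGroup.of Gen.q * (FreeGroup.of Gen.z)⁻¹ *
     (FreeGroup.of Gen.p * FreeGroup.of Gen.q)⁻¹ ∈ rels s by simp [rels])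
    simp only [map_mul, map_inv, ← e1, ← e2, ← e3] at this
    exact mul_inv_eq_one.mp this
  · have := key _ (show FreeGroup.of Gen.z ^ (3 ^ s) ∈ rels s by simp [rels])
    simpa only [map_pow, ← e3] using this

theorem pg_lift (s : ℕ) {H : Type} [Group H] (p q z : H)
    (r1 : p ^ 2 = q ^ 2) (r2 : (p * q) ^ 2 = q ^ 2) (r3 : z * p * z⁻¹ = q)
    (r4 : z * q * z⁻¹ = p * q) (r5 : z ^ (3 ^ s) = 1) :
    ∃ φ : PresentedGroup (rels s) →* H, φ (PresentedGroup.of Gen.p) = p ∧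
      φ (PresentedGroup.of Gen.q) = q ∧ φ (PresentedGroup.of Gen.z) = z := by
  let f : Gen → H := fun g => match g with
    | Gen.p => p
    | Gen.q => q
    | Gen.z => z
  have hf : ∀ r ∈ rels s, FreeGroup.lift f r = 1 := by
    intro r hr
    simp only [rels, Set.mem_insert_iff, Set.mem_singleton_iff] at hr
    rcases hr with h | h | h | h | h <;> subst h <;>
      simp only [map_mul, map_inv, map_pow, FreeGroup.lift_apply_of, f]
    · rw [r1, mul_inv_cancel]
    · rw [r2, mul_inv_cancel]
    · rw [r3, mul_inv_cancel]
    · rw [r4, mul_inv_cancel]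
    · exact r5
  exact ⟨PresentedGroup.toGroup hf, PresentedGroup.toGroup.of hf, PresentedGroup.toGroup.of hf,
    PresentedGroup.toGroup.of hf⟩

theorem pg_gen (s : ℕ) (K : Subgroup (PresentedGroup (rels s)))
    (hp : PresentedGroup.of Gen.p ∈ K) (hq : PresentedGroup.of Gen.q ∈ K)
    (hz : PresentedGroup.of Gen.z ∈ K) : K = ⊤ := by
  rw [eq_top_iff, ← PresentedGroup.closure_range_of (rels s), Subgroup.closure_le]
  rintro _ ⟨g, rfl⟩
  cases g <;> assumption

theorem pg_data (s j : ℕ) (hj : 3 ^ s = 9 * (2 * j + 1)) :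
    ∃ T u : PresentedGroup (rels s), PData (PresentedGroup (rels s)) T u (3 * j + 2) := by
  obtain ⟨p, hp⟩ : ∃ p : PresentedGroup (rels s), p = PresentedGroup.of Gen.p := ⟨_, rfl⟩
  obtain ⟨q, hq⟩ : ∃ p : PresentedGroup (rels s), p = PresentedGroup.of Gen.q := ⟨_, rfl⟩
  obtain ⟨z, hz⟩ : ∃ p : PresentedGroup (rels s), p = PresentedGroup.of Gen.z := ⟨_, rfl⟩
  obtain ⟨r1, r2, r3, r4, r5⟩ := pg_rels s p q z hp hq hz
  rw [hj] at r5
  obtain ⟨b1, b2⟩ := grp_B p q z j r1 r2 r3 r4 r5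
  have gen : Subgroup.closure {p ^ 2 * z, q * z ^ (6 * j + 4)} = ⊤ := by
    obtain ⟨p', q', z', s1, s2, s3, s4, s5, s6, s7⟩ :=
      grp_A (H := Subgroup.closure {p ^ 2 * z, q * z ^ (6 * j + 4)})
        ⟨p ^ 2 * z, Subgroup.subset_closure (by simp)⟩
        ⟨q * z ^ (6 * j + 4), Subgroup.subset_closure (by simp)⟩ j
        (Subtype.ext b1) (Subtype.ext b2)
    -- the elements recovered from `T, u` are the generators
    rw [← hj] at s5
    obtain ⟨φ, f1, f2, f3⟩ := pg_lift s p' q' z' s1 s2 s3 s4 s5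
    -- recovering: the closure is everything since it contains p, q, z
    have a3 := (q8_aux p q r1 r2).2.2
    have cz : Commute (p ^ 2) z := by
      have h : z * p ^ 2 * z⁻¹ = p ^ 2 := by
        have : z * p ^ 2 * z⁻¹ = (z * p * z⁻¹) ^ 2 := by simp [pow_succ, mul_assoc]
        rw [this, r3, ← r1]
      have : z * p ^ 2 = p ^ 2 * z := by nth_rw 2 [← h]; group
      exact this.symm
    set K := Subgroup.closure {p ^ 2 * z, q * z ^ (6 * j + 4)}
    have hT : p ^ 2 * z ∈ K := Subgroup.subset_closure (by simp)
    have hu : q * z ^ (6 * j + 4) ∈ K := Subgroup.subset_closure (by simp)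
    have hc : p ^ 2 ∈ K := by
      have : (p ^ 2 * z) ^ (9 * (2 * j + 1)) = p ^ 2 := by
        have e : 9 * (2 * j + 1) = 2 * (9 * j + 4) + 1 := by ring
        rw [cz.mul_pow, r5, mul_one, e, pow_succ, pow_mul, a3, one_pow, one_mul]
      rw [← this]; exact K.pow_mem hT _
    have hzK : z ∈ K := by
      have := K.mul_mem (K.inv_mem hc) hT
      rwa [inv_mul_cancel_left] at this
    have hqK : q ∈ K := by
      have := K.mul_mem hu (K.inv_mem (K.pow_mem hzK (6 * j + 4)))
      rwa [mul_inv_cancel_right] at this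
    have hpK : p ∈ K := by
      have : p = z⁻¹ * q * z := by rw [← r3]; group
      rw [this]; exact K.mul_mem (K.mul_mem (K.inv_mem hzK) hqK) hzK
    exact pg_gen s K (hp ▸ hpK) (hq ▸ hqK) (hz ▸ hzK)
  refine ⟨p ^ 2 * z, q * z ^ (6 * j + 4), b1, b2, gen, ?_, ?_⟩
  · rw [← gen]
    apply le_antisymm
    · rw [Subgroup.closure_le]
      rintro _ (rfl | rfl)
      · exact Subgroup.pow_mem _ (Subgroup.subset_closure (by simp)) _
      · exact Subgroup.subset_closure (by simp)
    · rw [Subgroup.closure_le]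
      have m1 : (p ^ 2 * z) ^ (3 * j + 2) ∈
        Subgroup.closure {(p ^ 2 * z) ^ (3 * j + 2), q * z ^ (6 * j + 4)} :=
        Subgroup.subset_closure (by simp)
      have m2 : q * z ^ (6 * j + 4) ∈
        Subgroup.closure {(p ^ 2 * z) ^ (3 * j + 2), q * z ^ (6 * j + 4)} :=
        Subgroup.subset_closure (by simp)
      rintro _ (rfl | rfl)
      · have : p ^ 2 * z = ((p ^ 2 * z) ^ (3 * j + 2)) ^ 2 *
            ((q * z ^ (6 * j + 4)) ^ (3 * (2 * j + 1)))⁻¹ := by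
          rw [pow_mul (q * z ^ (6 * j + 4)), b1, ← pow_mul, ← pow_mul, eq_mul_inv_iff_mul_eq,
            ← pow_succ']
          congr 1; ring
        have h := Subgroup.mul_mem _ (Subgroup.pow_mem _ m1 2)
          (Subgroup.inv_mem _ (Subgroup.pow_mem _ m2 (3 * (2 * j + 1))))
        rwa [← this] at h
      · exact m2
  · intro H _ T' u' h1 h2
    obtain ⟨p', q', z', s1, s2, s3, s4, s5, s6, s7⟩ := grp_A T' u' j h1 h2
    rw [← hj] at s5
    obtain ⟨φ, f1, f2, f3⟩ := pg_lift s p' q' z' s1 s2 s3 s4 s5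
    refine ⟨φ, ?_, ?_⟩
    · rw [map_mul, map_pow, hp, hz, f1, f3, s6]
    · rw [map_mul, map_pow, hq, hz, f2, f3, s7]

/-- Image of `p` in `SL(2, 3)`. -/
def slP : Matrix.SpecialLinearGroup (Fin 2) (ZMod 3) := ⟨!![0, 2; 1, 0], by decide⟩

/-- Image of `q` in `SL(2, 3)`. -/
def slQ : Matrix.SpecialLinearGroup (Fin 2) (ZMod 3) := ⟨!![1, 1; 1, 2], by decide⟩

/-- Image of `z` in `SL(2, 3)`. -/
def slZ : Matrix.SpecialLinearGroup (Fin 2) (ZMod 3) := ⟨!![1, 1; 0, 1], by decide⟩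

theorem sl_rels : slP ^ 2 = slQ ^ 2 ∧ (slP * slQ) ^ 2 = slQ ^ 2 ∧ slZ * slP = slQ * slZ ∧
    slZ * slQ = slP * slQ * slZ ∧ slZ ^ 3 = 1 := by
  refine ⟨?_, ?_, ?_, ?_, ?_⟩ <;> apply Subtype.ext <;> decide

theorem sl_inj : ∀ (i i' : Fin 4) (k k' : Fin 2),
    slP.1 ^ (i : ℕ) * slQ.1 ^ (k : ℕ) = slP.1 ^ (i' : ℕ) * slQ.1 ^ (k' : ℕ) →
      i = i' ∧ k = k' := by decide

theorem pg_card (s : ℕ) (hs : 1 ≤ s) : Finite (PresentedGroup (rels s)) ∧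
    Nat.card (PresentedGroup (rels s)) = 8 * 3 ^ s := by
  obtain ⟨p, hp⟩ : ∃ p : PresentedGroup (rels s), p = PresentedGroup.of Gen.p := ⟨_, rfl⟩
  obtain ⟨q, hq⟩ : ∃ p : PresentedGroup (rels s), p = PresentedGroup.of Gen.q := ⟨_, rfl⟩
  obtain ⟨z, hz⟩ : ∃ p : PresentedGroup (rels s), p = PresentedGroup.of Gen.z := ⟨_, rfl⟩
  obtain ⟨r1, r2, r3, r4, r5⟩ := pg_rels s p q z hp hq hz
  obtain ⟨a1, a2, a3⟩ := q8_aux p q r1 r2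
  have : NeZero (3 ^ s) := ⟨by positivity⟩
  let F : Fin 4 × Fin 2 × Fin (3 ^ s) → PresentedGroup (rels s) :=
    fun x => p ^ (x.1 : ℕ) * q ^ (x.2.1 : ℕ) * z ^ (x.2.2 : ℕ)
  have p4 : p ^ 4 = 1 := by rw [← a3, ← pow_mul]
  have qp : q * p = p ^ 3 * q := by
    have : q * p = p⁻¹ * q := by rw [eq_inv_mul_iff_mul_eq, ← mul_assoc, a1]
    rw [this]; congr 1
    rw [inv_eq_iff_mul_eq_one, ← pow_succ', p4]
  have zp : z * p = q * z := by rw [← r3]; group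
  have zq : z * q = p * q * z := by rw [← r4]; group
  -- the set of all normal forms
  have mem : ∀ i k l : ℕ, p ^ i * q ^ k * z ^ l ∈ Set.range F := by
    have base : ∀ i k l : ℕ, k < 2 → p ^ i * q ^ k * z ^ l ∈ Set.range F := by
      intro i k l hk
      refine ⟨(⟨i % 4, Nat.mod_lt _ (by norm_num)⟩, ⟨k, hk⟩, ⟨l % 3 ^ s, Nat.mod_lt _ (by positivity)⟩), ?_⟩
      simp only [F]
      rw [← pow_mod_orderOf, Nat.mod_mod_of_dvd _ (orderOf_dvd_of_pow_eq_one p4), pow_mod_orderOf]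
      congr 1
      rw [← pow_mod_orderOf, Nat.mod_mod_of_dvd _ (orderOf_dvd_of_pow_eq_one r5), pow_mod_orderOf]
    intro i k l
    have : q ^ k = p ^ (2 * (k / 2)) * q ^ (k % 2) := by
      rw [pow_mul, r1, ← pow_mul, ← pow_add, Nat.div_add_mod]
    rw [this, ← mul_assoc, ← pow_add]
    exact base _ _ _ (Nat.mod_lt _ (by norm_num))
  have qpi : ∀ i : ℕ, q * p ^ i = p ^ (3 * i) * q := by
    intro i
    induction i with
    | zero => simp
    | succ i ih => rw [pow_succ, ← mul_assoc, ih, mul_assoc, qp, ← mul_assoc, ← pow_add]; congr 2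
  have lp : ∀ x ∈ Set.range F, p * x ∈ Set.range F := by
    rintro _ ⟨⟨i, k, l⟩, rfl⟩
    have := mem (i + 1) k l
    simpa only [F, pow_succ', mul_assoc] using this
  have lq : ∀ x ∈ Set.range F, q * x ∈ Set.range F := by
    rintro _ ⟨⟨i, k, l⟩, rfl⟩
    have := mem (3 * i) (k + 1) l
    simp only [F]
    rwa [pow_succ', ← mul_assoc, ← qpi, mul_assoc q, mul_assoc q] at this
  have lp' : ∀ n : ℕ, ∀ x ∈ Set.range F, p ^ n * x ∈ Set.range F := by
    intro n
    induction n with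
    | zero => simp
    | succ n ih => intro x hx; rw [pow_succ', mul_assoc]; exact lp _ (ih x hx)
  have lq' : ∀ n : ℕ, ∀ x ∈ Set.range F, q ^ n * x ∈ Set.range F := by
    intro n
    induction n with
    | zero => simp
    | succ n ih => intro x hx; rw [pow_succ', mul_assoc]; exact lq _ (ih x hx)
  have lz : ∀ x ∈ Set.range F, z * x ∈ Set.range F := by
    rintro _ ⟨⟨i, k, l⟩, rfl⟩
    have e1 : z * p ^ (i : ℕ) = q ^ (i : ℕ) * z :=
      ((show SemiconjBy z p q from zp).pow_right _)
    have e2 : z * q ^ (k : ℕ) = (p * q) ^ (k : ℕ) * z :=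
      ((show SemiconjBy z q (p * q) from zq).pow_right _)
    have e : z * F (i, k, l) = q ^ (i : ℕ) * ((p * q) ^ (k : ℕ) * z ^ ((l : ℕ) + 1)) := by
      simp only [F]
      rw [← mul_assoc, ← mul_assoc, e1, mul_assoc (q ^ _), e2, pow_succ']
      simp only [mul_assoc]
    rw [e]
    apply lq'
    have hk : (k : ℕ) = 0 ∨ (k : ℕ) = 1 := by omega
    rcases hk with hk | hk
    · rw [hk]; simpa using mem 0 0 (l + 1)
    · rw [hk]; simpa using mem 1 1 (l + 1)
  have one_mem : (1 : PresentedGroup (rels s)) ∈ Set.range F := by simpa using mem 0 0 0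
  have z_pow : ∀ n : ℕ, ∀ x ∈ Set.range F, z ^ n * x ∈ Set.range F := by
    intro n
    induction n with
    | zero => simp
    | succ n ih => intro x hx; rw [pow_succ', mul_assoc]; exact lz _ (ih x hx)
  have surj : Function.Surjective F := by
    intro g
    have hfin : (Set.range F).Finite := Set.finite_range F
    -- submonoid/subgroup of elements stabilising the set
    let K : Subgroup (PresentedGroup (rels s)) :=
      { carrier := {g | ∀ x, g * x ∈ Set.range F ↔ x ∈ Set.range F}
        mul_mem' := by
          intro a b ha hb x
          rw [mul_assoc, ha, hb]
        one_mem' := by intro x; rw [one_mul]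
        inv_mem' := by
          intro a ha x
          rw [← ha, mul_inv_cancel_left] }
    have stab : ∀ g : PresentedGroup (rels s), ∀ n : ℕ, g ^ (n + 1) = 1 →
        (∀ m : ℕ, ∀ x ∈ Set.range F, g ^ m * x ∈ Set.range F) → g ∈ K := by
      intro g n hn h x
      constructor
      · intro hx
        have := h n _ hx
        rwa [← mul_assoc, ← pow_succ, hn, one_mul] at this
      · intro hx
        simpa using h 1 x hx
    have hK : K = ⊤ := by
      apply pg_gen s K
      · rw [← hp]; exact stab p 3 p4 lp'
      · rw [← hq]; exact stab q 3 (by rw [show 3 + 1 = 2 * 2 by rfl, pow_mul, ← r1, a3]) lq'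
      · rw [← hz]; exact stab z (3 ^ s - 1)
          (by rw [Nat.sub_add_cancel (Nat.one_le_pow _ _ (by norm_num)), r5]) z_pow
    have : g ∈ K := hK ▸ Subgroup.mem_top g
    have := (this 1).2 one_mem
    rwa [mul_one] at this
  have inj : Function.Injective F := by
    obtain ⟨t1, t2, t3, t4, t5⟩ := sl_rels
    obtain ⟨φ, f1, f2, f3⟩ := pg_lift s slP slQ slZ t1 t2 (by rw [t3, mul_inv_cancel_right])
      (by rw [t4, mul_inv_cancel_right]) (by
        obtain ⟨t, ht⟩ : ∃ t, s = t + 1 := ⟨s - 1, by omega⟩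
        rw [ht, pow_succ', pow_mul, t5, one_pow])
    obtain ⟨χ, g1, g2, g3⟩ := pg_lift s (H := Multiplicative (ZMod (3 ^ s)))
      1 1 (Multiplicative.ofAdd 1) (by simp) (by simp) (by simp) (by simp)
      (by rw [← ofAdd_nsmul]; simp)
    rintro ⟨i, k, l⟩ ⟨i', k', l'⟩ h
    have hl : l = l' := by
      have := congrArg χ h
      simp only [F, map_mul, map_pow, hp, hq, hz, g1, g2, g3, one_pow, one_mul, ← ofAdd_nsmul] at this
      have := Multiplicative.ofAdd.injective this
      simp only [nsmul_eq_mul, mul_one] at this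
      have := (ZMod.natCast_eq_natCast_iff _ _ _).1 this
      rw [Nat.ModEq, Nat.mod_eq_of_lt l.2, Nat.mod_eq_of_lt l'.2] at this
      exact Fin.ext this
    subst hl
    have h' : p ^ (i : ℕ) * q ^ (k : ℕ) = p ^ (i' : ℕ) * q ^ (k' : ℕ) := mul_right_cancel h
    have := congrArg φ h'
    simp only [map_mul, map_pow, hp, hq, f1, f2] at this
    have := congrArg Subtype.val this
    simp only [Matrix.SpecialLinearGroup.coe_mul, Matrix.SpecialLinearGroup.coe_pow] at this
    obtain ⟨rfl, rfl⟩ := sl_inj i i' k k' this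
    rfl
  have e := Equiv.ofBijective F ⟨inj, surj⟩
  refine ⟨Finite.of_equiv _ e, ?_⟩
  rw [← Nat.card_congr e]
  simp [Nat.card_prod]
  ring

section Algebra

open MonoidAlgebra

variable {G : Type} [Group G]

/-- The group element `g` in the integral group ring. -/
noncomputable def ge (g : G) : MonoidAlgebra ℤ G := MonoidAlgebra.of ℤ G g

/-- The augmentation. -/
noncomputable def aug : MonoidAlgebra ℤ G →ₐ[ℤ] ℤ := MonoidAlgebra.lift ℤ ℤ G 1

theorem ge_mul (g h : G) : ge (g * h) = ge g * ge h := map_mul (MonoidAlgebra.of ℤ G) g h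
theorem ge_one : ge (1 : G) = 1 := map_one (MonoidAlgebra.of ℤ G)
theorem ge_pow (g : G) (n : ℕ) : ge (g ^ n) = ge g ^ n := map_pow (MonoidAlgebra.of ℤ G) g n
theorem ge_inv_mul (g : G) : ge g⁻¹ * ge g = 1 := by rw [← ge_mul, inv_mul_cancel, ge_one]
theorem ge_mul_inv (g : G) : ge g * ge g⁻¹ = 1 := by rw [← ge_mul, mul_inv_cancel, ge_one]

@[simp] theorem aug_ge (g : G) : aug (ge g) = 1 := by simp [aug, ge]

theorem ga_ind {P : MonoidAlgebra ℤ G → Prop} (a : MonoidAlgebra ℤ G) (h1 : ∀ g, P (ge g))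
    (h2 : ∀ a b, P a → P b → P (a + b)) (h3 : ∀ (n : ℤ) a, P a → P (n • a)) : P a :=
  MonoidAlgebra.induction_on a h1 h2 h3

/-- The norm element. -/
noncomputable def nrm [Fintype G] : MonoidAlgebra ℤ G := ∑ g : G, ge g

theorem mul_nrm [Fintype G] (a : MonoidAlgebra ℤ G) : a * nrm = aug a • nrm := by
  induction a using ga_ind with
  | h1 g =>
    rw [aug_ge, one_smul, nrm, Finset.mul_sum]
    simp_rw [← ge_mul]
    exact Fintype.sum_equiv (Equiv.mulLeft g) _ _ (fun _ => rfl)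
  | h2 a b ha hb => rw [add_mul, ha, hb, map_add, add_smul]
  | h3 n a ha => rw [smul_mul_assoc, ha, map_smul, smul_assoc]

theorem nrm_mul_ge [Fintype G] (g : G) : nrm * ge g = (nrm : MonoidAlgebra ℤ G) := by
  rw [nrm, Finset.sum_mul]
  simp_rw [← ge_mul]
  exact Fintype.sum_equiv (Equiv.mulRight g) _ _ (fun _ => rfl)

theorem coeff_nrm [Fintype G] (g : G) : (nrm : MonoidAlgebra ℤ G).coeff g = 1 := by
  classical
  simp [nrm, ge, MonoidAlgebra.coeff_sum, Finsupp.single_apply]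

theorem aug_nrm [Fintype G] : aug (nrm : MonoidAlgebra ℤ G) = Fintype.card G := by
  simp [nrm]

theorem aug_eq_zero_of_mul_nrm [Fintype G] (a : MonoidAlgebra ℤ G) (h : a * nrm = 0) :
    aug a = 0 := by
  have := congrArg (fun x => x.coeff 1) ((mul_nrm a).symm.trans h)
  simpa [coeff_nrm, -zsmul_eq_mul] using this

/-- saturation lemma -/
theorem sat_aux [Fintype G] (S : Set G) (hS : Subgroup.closure S = ⊤) (n : ℤ)
    (w : MonoidAlgebra ℤ G) (h : ∀ g ∈ S, ∃ y, w * ge g - w = n • y) :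
    ∃ (c : ℤ) (w' : MonoidAlgebra ℤ G), w = c • nrm + n • w' := by
  have key : ∀ g : G, ∃ y, w * ge g - w = n • y := by
    intro g
    have hg : g ∈ Subgroup.closure S := hS ▸ Subgroup.mem_top g
    induction hg using Subgroup.closure_induction with
    | mem x hx => exact h x hx
    | one => exact ⟨0, by simp [ge_one]⟩
    | mul x y _ _ hx hy =>
      obtain ⟨a, ha⟩ := hx
      obtain ⟨b, hb⟩ := hy
      refine ⟨a * ge y + b, ?_⟩
      rw [smul_add, ← smul_mul_assoc, ← ha, ← hb, ge_mul, sub_mul, mul_assoc]; abel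
    | inv x _ hx =>
      obtain ⟨a, ha⟩ := hx
      refine ⟨-(a * ge x⁻¹), ?_⟩
      rw [smul_neg, ← smul_mul_assoc, ← ha, sub_mul, mul_assoc, ge_mul_inv, mul_one]; abel
  choose y hy using key
  refine ⟨w.coeff 1, ∑ g, (-(y g).coeff g) • ge g, ?_⟩
  classical
  ext g
  have := congrArg (fun x => x.coeff g) (hy g)
  simp [ge, -zsmul_eq_mul] at this
  simp [MonoidAlgebra.coeff_sum, coeff_nrm, ge, Finsupp.single_apply, -zsmul_eq_mul]
  linarith

theorem ker_aug_aux (T u : G) (hgen : Subgroup.closure {T, u} = ⊤) (a : MonoidAlgebra ℤ G)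
    (ha : aug a = 0) : ∃ α β, a = α * (ge T - 1) + β * (ge u - 1) := by
  have key : ∀ g : G, ∃ α β, ge g - 1 = α * (ge T - 1) + β * (ge u - 1) := by
    intro g
    have hg : g ∈ Subgroup.closure {T, u} := hgen ▸ Subgroup.mem_top g
    induction hg using Subgroup.closure_induction with
    | mem x hx =>
      rcases hx with rfl | rfl
      · exact ⟨1, 0, by simp⟩
      · exact ⟨0, 1, by simp⟩
    | one => exact ⟨0, 0, by simp [ge_one]⟩
    | mul x y _ _ hx hy =>
      obtain ⟨a, b, ha⟩ := hx
      obtain ⟨a', b', hb⟩ := hy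
      refine ⟨ge x * a' + a, ge x * b' + b, ?_⟩
      have : ge (x * y) - 1 = ge x * (ge y - 1) + (ge x - 1) := by rw [ge_mul]; noncomm_ring
      rw [this, ha, hb]; noncomm_ring
    | inv x _ hx =>
      obtain ⟨a, b, ha⟩ := hx
      refine ⟨-(ge x⁻¹ * a), -(ge x⁻¹ * b), ?_⟩
      have : ge x⁻¹ - 1 = - (ge x⁻¹ * (ge x - 1)) := by rw [mul_sub, ge_inv_mul]; simp
      rw [this, ha]; noncomm_ring
  have key2 : ∀ a : MonoidAlgebra ℤ G,
      ∃ α β, a - aug a • 1 = α * (ge T - 1) + β * (ge u - 1) := by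
    intro a
    induction a using ga_ind with
    | h1 g => simpa using key g
    | h2 a b ha hb =>
      obtain ⟨a1, b1, h1⟩ := ha
      obtain ⟨a2, b2, h2⟩ := hb
      refine ⟨a1 + a2, b1 + b2, ?_⟩
      have : a + b - aug (a + b) • 1 = (a - aug a • 1) + (b - aug b • 1) := by
        rw [map_add, add_smul]; abel
      rw [this, h1, h2, add_mul, add_mul]; abel
    | h3 n a ha =>
      obtain ⟨a1, b1, h1⟩ := ha
      refine ⟨n • a1, n • b1, ?_⟩
      rw [map_smul, smul_assoc, ← smul_sub, h1, smul_add, smul_mul_assoc, smul_mul_assoc]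
  have := key2 a
  rwa [ha, zero_smul, sub_zero] at this

/-- `1 + g + g²` -/
noncomputable def n3 (g : G) : MonoidAlgebra ℤ G := 1 + ge g + ge g ^ 2

/-- `1 + g + ⋯ + g^(b-1)` -/
noncomputable def mb (g : G) (b : ℕ) : MonoidAlgebra ℤ G := ∑ i ∈ Finset.range b, ge g ^ i

/-- entries of the second differential -/
noncomputable def c21 (T u : G) (b : ℕ) : MonoidAlgebra ℤ G := (1 + ge (T ^ b * u)) * mb T b - n3 T

/-- entries of the second differential -/
noncomputable def c22 (T u : G) (b : ℕ) : MonoidAlgebra ℤ G := (1 + ge (T ^ b * u)) * ge (T ^ b)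

theorem n3_mul (g : G) : n3 g * (ge g - 1) = ge (g ^ 3) - 1 := by
  rw [n3, ge_pow]; noncomm_ring

theorem mb_mul (g : G) (b : ℕ) : mb g b * (ge g - 1) = ge (g ^ b) - 1 := by
  rw [mb, ge_pow, geom_sum_mul]

theorem mul_mb (g : G) (b : ℕ) : (ge g - 1) * mb g b = ge (g ^ b) - 1 := by
  rw [mb, ge_pow, mul_geom_sum]

/-- d1 d0 = 0, first row -/
theorem dd10a {T u : G} {b : ℕ} (P : PData G T u b) :
    (-n3 T) * (ge T - 1) + n3 u * (ge u - 1) = 0 := by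
  rw [neg_mul, n3_mul, n3_mul, P.h1]; abel

theorem dd10b {T u : G} {b : ℕ} (P : PData G T u b) :
    c21 T u b * (ge T - 1) + c22 T u b * (ge u - 1) = 0 := by
  have h2 : ge (T ^ b * u) * ge (T ^ b * u) = ge (T ^ 3) := by rw [← ge_mul, ← pow_two, P.h2]
  rw [c21, c22, sub_mul, n3_mul, mul_assoc, mb_mul, mul_assoc, mul_sub (ge (T ^ b)), ← ge_mul,
    mul_one]
  have : (1 + ge (T ^ b * u)) * (ge (T ^ b) - 1) - (ge (T ^ 3) - 1) +
    (1 + ge (T ^ b * u)) * (ge (T ^ b * u) - ge (T ^ b)) =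
    ge (T ^ b * u) * ge (T ^ b * u) - ge (T ^ 3) := by noncomm_ring
  rw [this, h2, sub_self]

theorem h_central {T u : G} {b : ℕ} (P : PData G T u b) (g : G) : Commute (T ^ 3) g := by
  have hg : g ∈ Subgroup.closure {T, u} := P.gen ▸ Subgroup.mem_top g
  induction hg using Subgroup.closure_induction with
  | mem x hx =>
    rcases hx with rfl | rfl
    · exact (Commute.refl _).pow_left 3
    · rw [← P.h1]; exact (Commute.refl _).pow_left 3
  | one => exact Commute.one_right _
  | mul x y _ _ hx hy => exact hx.mul_right hy
  | inv x _ hx => exact hx.inv_right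

theorem h_central' {T u : G} {b : ℕ} (P : PData G T u b) (a : MonoidAlgebra ℤ G) :
    Commute (ge (T ^ 3)) a := by
  induction a using ga_ind with
  | h1 g => rw [commute_iff_eq, ← ge_mul, (h_central P g).eq, ge_mul]
  | h2 a b ha hb => exact ha.add_right hb
  | h3 n a ha => exact ha.smul_right n

theorem dd21a {T u : G} {b : ℕ} (P : PData G T u b) :
    (ge (T ^ b) - ge (T ^ b * u)) * (-n3 T) + (ge (T ^ b * u) - 1) * c21 T u b = 0 := by
  have h2 : ge (T ^ b * u) * ge (T ^ b * u) = ge (T ^ 3) := by rw [← ge_mul, ← pow_two, P.h2]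
  have e : (ge (T ^ b * u) - 1) * (1 + ge (T ^ b * u)) = ge (T ^ 3) - 1 := by
    rw [← h2]; noncomm_ring
  have e2 : (ge (T ^ 3) - 1) * mb T b = (ge (T ^ b) - 1) * n3 T := by
    rw [← n3_mul, mul_assoc, mul_mb]
    have : Commute (n3 T) (ge (T ^ b) - 1) := by
      rw [ge_pow, n3]
      have c : Commute (ge T) (ge T ^ b - 1) :=
        ((Commute.refl _).pow_right b).sub_right (Commute.one_right _)
      exact ((Commute.one_left _).add_left c).add_left (c.pow_left 2)
    exact this.eq
  rw [c21, mul_sub, ← mul_assoc, e, e2]; noncomm_ring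

theorem dd21b {T u : G} {b : ℕ} (P : PData G T u b) :
    (ge (T ^ b) - ge (T ^ b * u)) * n3 u + (ge (T ^ b * u) - 1) * c22 T u b = 0 := by
  have h2 : ge (T ^ b * u) * ge (T ^ b * u) = ge (T ^ 3) := by rw [← ge_mul, ← pow_two, P.h2]
  have e : (ge (T ^ b * u) - 1) * (1 + ge (T ^ b * u)) = ge (T ^ 3) - 1 := by
    rw [← h2]; noncomm_ring
  have e1 : (1 - ge u) * n3 u = 1 - ge (T ^ 3) := by
    rw [n3, ← P.h1, ge_pow]; noncomm_ring
  rw [c22, ← mul_assoc, e]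
  have : ge (T ^ b) - ge (T ^ b * u) = ge (T ^ b) * (1 - ge u) := by rw [ge_mul, mul_sub, mul_one]
  rw [this, mul_assoc, e1, sub_mul, (h_central' P _).eq]; noncomm_ring

/-- the affine permutation `n ↦ g n + e` -/
noncomputable def aff {M : Type} [AddCommGroup M] [Module (MonoidAlgebra ℤ G) M] (g : G) (e : M) :
    Equiv.Perm M where
  toFun n := ge g • n + e
  invFun n := ge g⁻¹ • (n - e)
  left_inv n := by simp [smul_smul, ge_inv_mul]
  right_inv n := by simp [smul_smul, ge_mul_inv]

theorem aff_apply {M : Type} [AddCommGroup M] [Module (MonoidAlgebra ℤ G) M] (g : G) (e n : M) :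
    aff g e n = ge g • n + e := rfl

theorem aff_mul {M : Type} [AddCommGroup M] [Module (MonoidAlgebra ℤ G) M] (g g' : G) (e e' : M) :
    aff g e * aff g' e' = aff (g * g') (ge g • e' + e) := by
  ext n
  rw [Equiv.Perm.mul_apply, aff_apply, aff_apply, aff_apply, smul_add, smul_smul, ge_mul, add_assoc]

theorem aff_pow {M : Type} [AddCommGroup M] [Module (MonoidAlgebra ℤ G) M] (g : G) (e : M) (k : ℕ) :
    aff g e ^ k = aff (g ^ k) (mb g k • e) := by
  induction k with
  | zero => ext n; simp [aff_apply, mb, ge_one]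
  | succ k ih =>
    rw [pow_succ, ih, aff_mul, ← pow_succ, ← add_smul]
    congr 2
    rw [mb, mb, Finset.sum_range_succ, ge_pow, add_comm]

theorem mb3 (g : G) : mb g 3 = n3 g := by simp [mb, n3, Finset.sum_range_succ]
theorem mb2 (g : G) : mb g 2 = 1 + ge g := by simp [mb, Finset.sum_range_succ]

/-- first syzygies of the augmentation ideal come from the relations -/
theorem ex1 {T u : G} {b : ℕ} (P : PData G T u b) (α β : MonoidAlgebra ℤ G)
    (h : α * (ge T - 1) + β * (ge u - 1) = 0) :
    ∃ c d, α = c * (-n3 T) + d * c21 T u b ∧ β = c * n3 u + d * c22 T u b := by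
  let A := MonoidAlgebra ℤ G
  let S : Submodule A (A × A) := Submodule.span A {(-n3 T, n3 u), (c21 T u b, c22 T u b)}
  let N := (A × A) ⧸ S
  let eT : N := Submodule.Quotient.mk (1, 0)
  let eu : N := Submodule.Quotient.mk (0, 1)
  have hmk : ∀ a c : A, (Submodule.Quotient.mk (a, c) : N) = a • eT + c • eu := by
    intro a c
    simp only [eT, eu, ← Submodule.Quotient.mk_smul, ← Submodule.Quotient.mk_add]
    congr 1; simp
  have r1 : n3 T • eT = n3 u • eu := by
    have : (Submodule.Quotient.mk (-n3 T, n3 u) : N) = 0 := by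
      rw [Submodule.Quotient.mk_eq_zero]; exact Submodule.subset_span (by simp)
    rw [hmk, neg_smul, neg_add_eq_zero] at this
    exact this
  have r2 : (1 + ge (T ^ b * u)) • (ge (T ^ b) • eu + mb T b • eT) = n3 T • eT := by
    have : (Submodule.Quotient.mk (c21 T u b, c22 T u b) : N) = 0 := by
      rw [Submodule.Quotient.mk_eq_zero]; exact Submodule.subset_span (by simp)
    rw [hmk, c21, c22, sub_smul] at this
    rw [smul_add, smul_smul, smul_smul, ← sub_eq_zero, ← this]; abel
  obtain ⟨φ, f1, f2⟩ := P.univ (Equiv.Perm N) (aff T eT) (aff u eu)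
    (by rw [aff_pow, aff_pow, mb3, mb3, P.h1, r1])
    (by rw [aff_pow, aff_mul, aff_pow, aff_pow, mb3, mb2, P.h2, r2])
  have hφ : ∀ g, ∃ e, φ g = aff g e := by
    intro g
    have hg : g ∈ Subgroup.closure {T, u} := P.gen ▸ Subgroup.mem_top g
    induction hg using Subgroup.closure_induction with
    | mem x hx =>
      rcases hx with rfl | rfl
      · exact ⟨_, f1⟩
      · exact ⟨_, f2⟩
    | one => exact ⟨0, by ext n; simp [aff_apply, ge_one]⟩
    | mul x y _ _ hx hy =>
      obtain ⟨e, he⟩ := hx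
      obtain ⟨e', he'⟩ := hy
      exact ⟨_, by rw [map_mul, he, he', aff_mul]⟩
    | inv x _ hx =>
      obtain ⟨e, he⟩ := hx
      refine ⟨-(ge x⁻¹ • e), ?_⟩
      rw [map_inv, he, inv_eq_iff_mul_eq_one, aff_mul]
      ext n
      simp [aff_apply, smul_smul, ge_mul_inv, ge_one]
  choose D hD using hφ
  have D0 : ∀ g, D g = φ g 0 := by intro g; rw [hD, aff_apply, smul_zero, zero_add]
  have Dmul : ∀ g g', D (g * g') = ge g • D g' + D g := by
    intro g g'
    rw [D0 (g * g'), map_mul, Equiv.Perm.mul_apply, ← D0 g', hD g, aff_apply]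
  have DT : D T = eT := by rw [D0, f1, aff_apply, smul_zero, zero_add]
  have Du : D u = eu := by rw [D0, f2, aff_apply, smul_zero, zero_add]
  let ψ : A →ₗ[ℤ] N := (Finsupp.linearCombination ℤ D) ∘ₗ
    (MonoidAlgebra.coeffLinearEquiv ℤ).toLinearMap
  have hψ : ∀ g, ψ (ge g) = D g := by
    intro g
    show Finsupp.linearCombination ℤ D (Finsupp.single g 1) = D g
    simp
  have hψ2 : ∀ (a : A) (g : G), ψ (a * (ge g - 1)) = a • D g := by
    intro a g
    induction a using ga_ind with
    | h1 g' =>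
      rw [mul_sub, mul_one, ← ge_mul, map_sub, hψ, hψ, Dmul, add_sub_cancel_right]
    | h2 a b ha hb => rw [add_mul, map_add, ha, hb, add_smul]
    | h3 n a ha => rw [smul_mul_assoc, map_smul, ha, smul_assoc]
  have h0 : (Submodule.Quotient.mk (α, β) : N) = 0 := by
    rw [hmk, ← DT, ← Du, ← hψ2, ← hψ2, ← map_add, h, map_zero]
  rw [Submodule.Quotient.mk_eq_zero, Submodule.mem_span_pair] at h0
  obtain ⟨c, d, hcd⟩ := h0
  rw [Prod.ext_iff] at hcd
  exact ⟨c, d, hcd.1.symm, hcd.2.symm⟩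

theorem sat {T u : G} {b : ℕ} [Fintype G] (P : PData G T u b) (n : ℤ) (w y1 y2 : MonoidAlgebra ℤ G)
    (h1 : w * (ge (T ^ b) - ge (T ^ b * u)) = n • y1) (h2 : w * (ge (T ^ b * u) - 1) = n • y2) :
    ∃ (c : ℤ) (w' : MonoidAlgebra ℤ G), w = c • nrm + n • w' := by
  have e1 : w * ge (T ^ b) - w = n • (y1 + y2) := by
    rw [smul_add, ← h1, ← h2]; noncomm_ring
  apply sat_aux _ P.gen' n w
  rintro g (rfl | rfl)
  · exact ⟨_, e1⟩
  · refine ⟨y2 - (y1 + y2) * ge g, ?_⟩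
    rw [smul_sub, ← smul_mul_assoc, ← e1, ← h2, ge_mul]; noncomm_ring

theorem ex3 {T u : G} {b : ℕ} [Fintype G] (P : PData G T u b) (w : MonoidAlgebra ℤ G)
    (h1 : w * (ge (T ^ b) - ge (T ^ b * u)) = 0) (h2 : w * (ge (T ^ b * u) - 1) = 0) :
    ∃ c : ℤ, w = c • nrm := by
  obtain ⟨c, w', h⟩ := sat P 0 w 0 0 (by rw [h1, smul_zero]) (by rw [h2, smul_zero])
  exact ⟨c, by rw [h, zero_smul, add_zero]⟩

theorem tors_aux {M : Type} [AddCommGroup M] [Module.Finite ℤ M] [Module.Free ℤ M]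
    (S K : Submodule ℤ M) (hSK : S ≤ K) (hr : Module.finrank ℤ S = Module.finrank ℤ K) (y : M)
    (hy : y ∈ K) : ∃ n : ℤ, n ≠ 0 ∧ n • y ∈ S := by
  have e : Module.finrank ℤ (S.submoduleOf K) = Module.finrank ℤ S :=
    (Submodule.submoduleOfEquivOfLe hSK).finrank_eq
  have hq : Module.finrank ℤ (K ⧸ S.submoduleOf K) = 0 := by
    have := Submodule.finrank_quotient_add_finrank (S.submoduleOf K)
    omega
  rw [Module.finrank_eq_zero_iff_isTorsion] at hq
  obtain ⟨⟨n, hn⟩, h⟩ := @hq (Submodule.Quotient.mk ⟨y, hy⟩)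
  refine ⟨n, nonZeroDivisors.ne_zero hn, ?_⟩
  have h' : (Submodule.Quotient.mk (n • ⟨y, hy⟩ : K) : K ⧸ S.submoduleOf K) = 0 := h
  rw [Submodule.Quotient.mk_eq_zero] at h'
  exact h'

theorem rank_nullity_aux {M M' : Type} [AddCommGroup M] [AddCommGroup M'] [Module.Finite ℤ M]
    (f : M →ₗ[ℤ] M') : Module.finrank ℤ (LinearMap.range f) + Module.finrank ℤ (LinearMap.ker f) =
      Module.finrank ℤ M := by
  rw [← f.quotKerEquivRange.finrank_eq, Submodule.finrank_quotient_add_finrank]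

/-- left multiplication combination maps -/
noncomputable def rowMap (a a' : MonoidAlgebra ℤ G) :
    MonoidAlgebra ℤ G →ₗ[ℤ] MonoidAlgebra ℤ G × MonoidAlgebra ℤ G :=
  (LinearMap.mulRight ℤ a).prod (LinearMap.mulRight ℤ a')

theorem ex2 {T u : G} {b : ℕ} [Fintype G] (P : PData G T u b) (α β : MonoidAlgebra ℤ G)
    (h1 : α * (-n3 T) + β * c21 T u b = 0) (h2 : α * n3 u + β * c22 T u b = 0) :
    ∃ w, α = w * (ge (T ^ b) - ge (T ^ b * u)) ∧ β = w * (ge (T ^ b * u) - 1) := by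
  have : Module.Free ℤ (MonoidAlgebra ℤ G) := Module.Free.of_equiv (MonoidAlgebra.coeffLinearEquiv ℤ).symm
  have : Module.Finite ℤ (MonoidAlgebra ℤ G) := Module.Finite.equiv (MonoidAlgebra.coeffLinearEquiv ℤ).symm
  let D0 : (MonoidAlgebra ℤ G) × (MonoidAlgebra ℤ G) →ₗ[ℤ] (MonoidAlgebra ℤ G) :=
    (LinearMap.mulRight ℤ (ge T - 1)).coprod (LinearMap.mulRight ℤ (ge u - 1))
  let D1 : (MonoidAlgebra ℤ G) × (MonoidAlgebra ℤ G) →ₗ[ℤ] (MonoidAlgebra ℤ G) × (MonoidAlgebra ℤ G) := (rowMap (-n3 T) (n3 u)).coprod (rowMap (c21 T u b) (c22 T u b))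
  let D2 : (MonoidAlgebra ℤ G) →ₗ[ℤ] (MonoidAlgebra ℤ G) × (MonoidAlgebra ℤ G) := rowMap (ge (T ^ b) - ge (T ^ b * u)) (ge (T ^ b * u) - 1)
  have a0 : ∀ x, D0 x = x.1 * (ge T - 1) + x.2 * (ge u - 1) := fun x => rfl
  have a1 : ∀ x, D1 x = (x.1 * (-n3 T) + x.2 * c21 T u b, x.1 * n3 u + x.2 * c22 T u b) :=
    fun x => rfl
  have a2 : ∀ x, D2 x = (x * (ge (T ^ b) - ge (T ^ b * u)), x * (ge (T ^ b * u) - 1)) :=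
    fun x => rfl
  have d10 : ∀ x, D0 (D1 x) = 0 := by
    intro x
    have : D0 (D1 x) = x.1 * ((-n3 T) * (ge T - 1) + n3 u * (ge u - 1)) +
        x.2 * (c21 T u b * (ge T - 1) + c22 T u b * (ge u - 1)) := by
      rw [a0, a1]; dsimp only; simp only [add_mul, mul_add, mul_assoc]; abel
    rw [this, dd10a P, dd10b P, mul_zero, mul_zero, add_zero]
  have d21 : ∀ x, D1 (D2 x) = 0 := by
    intro x
    rw [a1, a2]; dsimp only
    rw [mul_assoc, mul_assoc, mul_assoc, mul_assoc, ← mul_add, ← mul_add, dd21a P, dd21b P, mul_zero]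
    rfl
  have k0 : LinearMap.range D0 = LinearMap.ker (aug : (MonoidAlgebra ℤ G) →ₐ[ℤ] ℤ).toLinearMap := by
    apply le_antisymm
    · rintro _ ⟨x, rfl⟩
      rw [LinearMap.mem_ker, a0]
      show aug (x.1 * (ge T - 1) + x.2 * (ge u - 1)) = 0
      simp only [map_add, map_mul, map_sub, aug_ge, map_one, sub_self, mul_zero, add_zero]
    · intro a ha
      obtain ⟨α, β, h⟩ := ker_aug_aux T u P.gen a ha
      exact ⟨(α, β), h.symm⟩
  have k1 : LinearMap.range D1 = LinearMap.ker D0 := by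
    apply le_antisymm
    · rintro _ ⟨x, rfl⟩; exact d10 x
    · rintro ⟨α, β⟩ h
      obtain ⟨c, d, h1, h2⟩ := ex1 P α β h
      exact ⟨(c, d), by rw [a1, h1, h2]⟩
  have k2 : LinearMap.range D2 ≤ LinearMap.ker D1 := by
    rintro _ ⟨x, rfl⟩; exact d21 x
  have k3 : LinearMap.ker D2 = ℤ ∙ (nrm : (MonoidAlgebra ℤ G)) := by
    ext w
    rw [Submodule.mem_span_singleton, LinearMap.mem_ker, a2, Prod.mk_eq_zero]
    constructor
    · rintro ⟨h1, h2⟩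
      obtain ⟨c, hc⟩ := ex3 P w h1 h2
      exact ⟨c, hc.symm⟩
    · rintro ⟨c, rfl⟩
      rw [smul_mul_assoc, smul_mul_assoc, mul_sub, mul_sub, nrm_mul_ge, nrm_mul_ge, mul_one, sub_self,
        smul_zero]
      exact ⟨rfl, rfl⟩
  have hn : (nrm : (MonoidAlgebra ℤ G)) ≠ 0 := by
    intro h
    have := coeff_nrm (1 : G)
    rw [show (nrm : MonoidAlgebra ℤ G) = 0 from h] at this
    simp at this
  have f3 : Module.finrank ℤ (LinearMap.ker D2) = 1 := by
    rw [k3, ← (LinearEquiv.toSpanNonzeroSingleton ℤ (MonoidAlgebra ℤ G) nrm hn).finrank_eq, Module.finrank_self]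
  have faug : Module.finrank ℤ (LinearMap.range (aug : (MonoidAlgebra ℤ G) →ₐ[ℤ] ℤ).toLinearMap) = 1 := by
    have : LinearMap.range (aug : (MonoidAlgebra ℤ G) →ₐ[ℤ] ℤ).toLinearMap = ⊤ := by
      rw [LinearMap.range_eq_top]
      intro n
      exact ⟨n • 1, by simp⟩
    rw [this, finrank_top, Module.finrank_self]
  have g0 := rank_nullity_aux (aug : (MonoidAlgebra ℤ G) →ₐ[ℤ] ℤ).toLinearMap
  have g1 := rank_nullity_aux D0
  have g2 := rank_nullity_aux D1
  have g3 := rank_nullity_aux D2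
  rw [Module.finrank_prod] at g1 g2
  rw [k0] at g1
  rw [k1] at g2
  have hr : Module.finrank ℤ (LinearMap.range D2) = Module.finrank ℤ (LinearMap.ker D1) := by omega
  obtain ⟨n, hn0, w, hw⟩ := tors_aux _ _ k2 hr (α, β) (by rw [LinearMap.mem_ker, a1, h1, h2]; rfl)
  rw [a2, Prod.smul_mk, Prod.mk.injEq] at hw
  obtain ⟨c, w', hw'⟩ := sat P n w α β hw.1 hw.2
  have inj : ∀ a a' : (MonoidAlgebra ℤ G), n • a = n • a' → a = a' := fun a a' h => smul_right_injective (MonoidAlgebra ℤ G) hn0 h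
  refine ⟨w', inj _ _ ?_, inj _ _ ?_⟩
  · rw [← hw.1, hw', add_mul, smul_mul_assoc, mul_sub, nrm_mul_ge, nrm_mul_ge, sub_self, smul_zero,
      zero_add, smul_mul_assoc]
  · rw [← hw.2, hw', add_mul, smul_mul_assoc, mul_sub, nrm_mul_ge, mul_one, sub_self, smul_zero,
      zero_add, smul_mul_assoc]

end Algebra

section Resolution

/-- ranks of the periodic resolution -/
def rk : ℕ → ℕ
  | 0 => 1
  | 1 => 2
  | 2 => 2
  | 3 => 1
  | (n + 4) => rk n

variable {G : Type} [Group G]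

/-- differentials of the periodic resolution -/
noncomputable def df [Fintype G] (T u : G) (b : ℕ) :
    (n : ℕ) → Matrix (Fin (rk (n + 1))) (Fin (rk n)) (MonoidAlgebra ℤ G)
  | 0 => (!![ge T - 1; ge u - 1] : Matrix (Fin 2) (Fin 1) (MonoidAlgebra ℤ G))
  | 1 => (!![-n3 T, n3 u; c21 T u b, c22 T u b] : Matrix (Fin 2) (Fin 2) (MonoidAlgebra ℤ G))
  | 2 => (!![ge (T ^ b) - ge (T ^ b * u), ge (T ^ b * u) - 1] :
      Matrix (Fin 1) (Fin 2) (MonoidAlgebra ℤ G))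
  | 3 => (!![nrm] : Matrix (Fin 1) (Fin 1) (MonoidAlgebra ℤ G))
  | (n + 4) => df T u b n

open Matrix

theorem df_df [Fintype G] {T u : G} {b : ℕ} (P : PData G T u b) :
    (n : ℕ) → df T u b (n + 1) * df T u b n = 0
  | 0 => by
    show (!![-n3 T, n3 u; c21 T u b, c22 T u b] : Matrix (Fin 2) (Fin 2) (MonoidAlgebra ℤ G)) *
      (!![ge T - 1; ge u - 1] : Matrix (Fin 2) (Fin 1) (MonoidAlgebra ℤ G)) = 0
    refine Matrix.ext fun i j => ?_
    fin_cases i <;> fin_cases j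
    · simpa [Matrix.mul_apply, Fin.sum_univ_two] using dd10a P
    · simpa [Matrix.mul_apply, Fin.sum_univ_two] using dd10b P
  | 1 => by
    show (!![ge (T ^ b) - ge (T ^ b * u), ge (T ^ b * u) - 1] :
      Matrix (Fin 1) (Fin 2) (MonoidAlgebra ℤ G)) *
      (!![-n3 T, n3 u; c21 T u b, c22 T u b] : Matrix (Fin 2) (Fin 2) (MonoidAlgebra ℤ G)) = 0
    refine Matrix.ext fun i j => ?_
    fin_cases i <;> fin_cases j
    · simpa [Matrix.mul_apply, Fin.sum_univ_two] using dd21a P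
    · simpa [Matrix.mul_apply, Fin.sum_univ_two] using dd21b P
  | 2 => by
    show (!![nrm] : Matrix (Fin 1) (Fin 1) (MonoidAlgebra ℤ G)) *
      (!![ge (T ^ b) - ge (T ^ b * u), ge (T ^ b * u) - 1] :
      Matrix (Fin 1) (Fin 2) (MonoidAlgebra ℤ G)) = 0
    refine Matrix.ext fun i j => ?_
    fin_cases i <;> fin_cases j <;> simp [Matrix.mul_apply, mul_sub, nrm_mul_ge]
  | 3 => by
    show (!![ge T - 1; ge u - 1] : Matrix (Fin 2) (Fin 1) (MonoidAlgebra ℤ G)) *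
      (!![nrm] : Matrix (Fin 1) (Fin 1) (MonoidAlgebra ℤ G)) = 0
    refine Matrix.ext fun i j => ?_
    fin_cases i <;> fin_cases j <;> simp [Matrix.mul_apply, mul_nrm]
  | (n + 4) => df_df P n

theorem df_exact [Fintype G] {T u : G} {b : ℕ} (P : PData G T u b) :
    (n : ℕ) → ∀ v : Fin (rk (n + 1)) → MonoidAlgebra ℤ G, v ᵥ* df T u b n = 0 →
      ∃ w : Fin (rk (n + 2)) → MonoidAlgebra ℤ G, v = w ᵥ* df T u b (n + 1)
  | 0 => by
    show ∀ v : Fin 2 → MonoidAlgebra ℤ G,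
      v ᵥ* (!![ge T - 1; ge u - 1] : Matrix (Fin 2) (Fin 1) (MonoidAlgebra ℤ G)) = 0 →
      ∃ w : Fin 2 → MonoidAlgebra ℤ G, v = w ᵥ*
        (!![-n3 T, n3 u; c21 T u b, c22 T u b] : Matrix (Fin 2) (Fin 2) (MonoidAlgebra ℤ G))
    intro v hv
    have h0 := congrFun hv 0
    simp [Matrix.vecMul, dotProduct, Fin.sum_univ_two] at h0
    obtain ⟨c, d, h1, h2⟩ := ex1 P _ _ h0
    refine ⟨![c, d], ?_⟩
    ext1 i
    fin_cases i
    · simpa [Matrix.vecMul, dotProduct, Fin.sum_univ_two] using h1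
    · simpa [Matrix.vecMul, dotProduct, Fin.sum_univ_two] using h2
  | 1 => by
    show ∀ v : Fin 2 → MonoidAlgebra ℤ G, v ᵥ*
        (!![-n3 T, n3 u; c21 T u b, c22 T u b] : Matrix (Fin 2) (Fin 2) (MonoidAlgebra ℤ G)) = 0 →
      ∃ w : Fin 1 → MonoidAlgebra ℤ G, v = w ᵥ*
        (!![ge (T ^ b) - ge (T ^ b * u), ge (T ^ b * u) - 1] :
          Matrix (Fin 1) (Fin 2) (MonoidAlgebra ℤ G))
    intro v hv
    have h0 := congrFun hv 0
    have h1 := congrFun hv 1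
    simp only [Matrix.vecMul, dotProduct, Fin.sum_univ_two, Matrix.of_apply, Matrix.cons_val', Matrix.cons_val_zero, Matrix.cons_val_one, Matrix.cons_val_fin_one, Pi.zero_apply] at h0 h1
    obtain ⟨w, h1, h2⟩ := ex2 P _ _ h0 h1
    refine ⟨![w], ?_⟩
    ext1 i
    fin_cases i
    · simpa [Matrix.vecMul, dotProduct] using h1
    · simpa [Matrix.vecMul, dotProduct] using h2
  | 2 => by
    show ∀ v : Fin 1 → MonoidAlgebra ℤ G, v ᵥ*
        (!![ge (T ^ b) - ge (T ^ b * u), ge (T ^ b * u) - 1] :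
          Matrix (Fin 1) (Fin 2) (MonoidAlgebra ℤ G)) = 0 →
      ∃ w : Fin 1 → MonoidAlgebra ℤ G, v = w ᵥ*
        (!![nrm] : Matrix (Fin 1) (Fin 1) (MonoidAlgebra ℤ G))
    intro v hv
    have h0 := congrFun hv 0
    have h1 := congrFun hv 1
    simp [Matrix.vecMul, dotProduct] at h0 h1
    obtain ⟨c, hc⟩ := ex3 P _ h0 h1
    refine ⟨![c • 1], ?_⟩
    ext1 i
    fin_cases i
    simpa [Matrix.vecMul, dotProduct] using hc
  | 3 => by
    show ∀ v : Fin 1 → MonoidAlgebra ℤ G, v ᵥ*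
        (!![nrm] : Matrix (Fin 1) (Fin 1) (MonoidAlgebra ℤ G)) = 0 →
      ∃ w : Fin 2 → MonoidAlgebra ℤ G, v = w ᵥ*
        (!![ge T - 1; ge u - 1] : Matrix (Fin 2) (Fin 1) (MonoidAlgebra ℤ G))
    intro v hv
    have h0 := congrFun hv 0
    simp [Matrix.vecMul, dotProduct] at h0
    obtain ⟨c, d, h⟩ := ker_aug_aux T u P.gen _ (aug_eq_zero_of_mul_nrm _ h0)
    refine ⟨![c, d], ?_⟩
    ext1 i
    fin_cases i
    simpa [Matrix.vecMul, dotProduct, Fin.sum_univ_two] using h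
  | (n + 4) => df_exact P n

/-- augmented differential -/
noncomputable def dz [Fintype G] (T u : G) (b n : ℕ) : Matrix (Fin (rk (n + 1))) (Fin (rk n)) ℤ :=
  (df T u b n).map aug

/-- the cokernel of `dz n` is cyclic of order `m`, and `dz (n+1) = 0` -/
def CokerIs [Fintype G] (T u : G) (b n m : ℕ) : Prop :=
  dz T u b (n + 1) = 0 ∧ ∃ φ : (Fin (rk (n + 1)) → ℤ) →ₗ[ℤ] ZMod m, Function.Surjective φ ∧
    ∀ y, φ y = 0 ↔ ∃ x, y = dz T u b n *ᵥ x

theorem aug_n3 (g : G) : aug (n3 g) = 3 := by simp [n3]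
theorem aug_mb (g : G) (b : ℕ) : aug (mb g b) = b := by simp [mb]
theorem aug_c21 (T u : G) (b : ℕ) : aug (c21 T u b) = 2 * b - 3 := by
  simp [c21, aug_n3, aug_mb]
theorem aug_c22 (T u : G) (b : ℕ) : aug (c22 T u b) = 2 := by
  simp [c22]

theorem dz0 [Fintype G] (T u : G) (b : ℕ) : dz T u b 0 = 0 := by
  show (!![ge T - 1; ge u - 1] : Matrix (Fin 2) (Fin 1) (MonoidAlgebra ℤ G)).map aug = 0
  ext i j
  fin_cases i <;> fin_cases j <;> simp

theorem dz1 [Fintype G] (T u : G) (b : ℕ) :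
    dz T u b 1 = (!![-3, 3; 2 * b - 3, 2] : Matrix (Fin 2) (Fin 2) ℤ) := by
  show (!![-n3 T, n3 u; c21 T u b, c22 T u b] : Matrix (Fin 2) (Fin 2) (MonoidAlgebra ℤ G)).map aug
    = _
  ext i j
  fin_cases i <;> fin_cases j <;> simp [aug_n3, aug_c21, aug_c22]

theorem dz2 [Fintype G] (T u : G) (b : ℕ) : dz T u b 2 = 0 := by
  show (!![ge (T ^ b) - ge (T ^ b * u), ge (T ^ b * u) - 1] :
      Matrix (Fin 1) (Fin 2) (MonoidAlgebra ℤ G)).map aug = 0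
  ext i j
  fin_cases i <;> fin_cases j <;> simp

theorem dz3 [Fintype G] (T u : G) (b : ℕ) :
    dz T u b 3 = (!![(Fintype.card G : ℤ)] : Matrix (Fin 1) (Fin 1) ℤ) := by
  show (!![nrm] : Matrix (Fin 1) (Fin 1) (MonoidAlgebra ℤ G)).map aug = _
  ext i j
  fin_cases i; fin_cases j; simp [aug_nrm]

theorem coker1 [Fintype G] (T u : G) (b m : ℕ) (hm : 6 * b = m + 3) : CokerIs T u b 1 m := by
  refine ⟨dz2 T u b, ?_⟩
  rw [dz1]
  show ∃ φ : (Fin 2 → ℤ) →ₗ[ℤ] ZMod m, Function.Surjective φ ∧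
    ∀ y, φ y = 0 ↔ ∃ x : Fin 2 → ℤ, y = (!![-3, 3; 2 * b - 3, 2] : Matrix (Fin 2) (Fin 2) ℤ) *ᵥ x
  have hm' : (6 : ℤ) * b = m + 3 := by exact_mod_cast hm
  let φ : (Fin 2 → ℤ) →ₗ[ℤ] ZMod m :=
    { toFun := fun y => ((-2 * y 0 + 3 * y 1 : ℤ) : ZMod m)
      map_add' := by intro x y; push_cast [Pi.add_apply]; ring
      map_smul' := by intro c x; simp; ring }
  refine ⟨φ, ?_, ?_⟩
  · intro x
    obtain ⟨n, rfl⟩ := ZMod.intCast_surjective x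
    exact ⟨![n, n], by simp [φ]; ring⟩
  · intro y
    have hφ : φ y = ((-2 * y 0 + 3 * y 1 : ℤ) : ZMod m) := rfl
    rw [hφ, ZMod.intCast_zmod_eq_zero_iff_dvd]
    constructor
    · rintro ⟨k, hk⟩
      obtain ⟨g, hg⟩ : (3 : ℤ) ∣ y 0 := by
        have h3 : (3 : ℤ) ∣ 2 * y 0 := ⟨y 1 - (2 * b - 1) * k, by linear_combination hk * (-1) + hm' * k⟩
        omega
      have hm2 : (m : ℤ) = 6 * b - 3 := by linarith
      refine ⟨![k, k + g], ?_⟩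
      ext1 i
      fin_cases i
      · simp [Matrix.mulVec, dotProduct, Fin.sum_univ_two]
        linarith
      · simp [Matrix.mulVec, dotProduct, Fin.sum_univ_two]
        rw [hm2] at hk
        have : 3 * y 1 = 3 * ((2 * b - 3) * k + 2 * (k + g)) := by linear_combination hk + 2 * hg
        linarith
    · rintro ⟨x, rfl⟩
      refine ⟨x 0, ?_⟩
      simp [Matrix.mulVec, dotProduct, Fin.sum_univ_two]
      linear_combination hm' * x 0

theorem coker3 [Fintype G] (T u : G) (b : ℕ) : CokerIs T u b 3 (Fintype.card G) := by
  refine ⟨dz0 T u b, ?_⟩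
  rw [dz3]
  show ∃ φ : (Fin 1 → ℤ) →ₗ[ℤ] ZMod (Fintype.card G), Function.Surjective φ ∧
    ∀ y, φ y = 0 ↔ ∃ x : Fin 1 → ℤ, y = (!![(Fintype.card G : ℤ)] : Matrix (Fin 1) (Fin 1) ℤ) *ᵥ x
  let φ : (Fin 1 → ℤ) →ₗ[ℤ] ZMod (Fintype.card G) :=
    { toFun := fun y => ((y 0 : ℤ) : ZMod (Fintype.card G))
      map_add' := by intro x y; push_cast [Pi.add_apply]; ring
      map_smul' := by intro c x; simp }
  refine ⟨φ, ?_, ?_⟩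
  · intro x
    obtain ⟨n, rfl⟩ := ZMod.intCast_surjective x
    exact ⟨![n], by simp [φ]⟩
  · intro y
    have hφ : φ y = ((y 0 : ℤ) : ZMod (Fintype.card G)) := rfl
    rw [hφ, ZMod.intCast_zmod_eq_zero_iff_dvd]
    constructor
    · rintro ⟨k, hk⟩
      refine ⟨![k], ?_⟩
      ext1 i
      fin_cases i
      simpa [Matrix.mulVec, dotProduct] using hk
    · rintro ⟨x, rfl⟩
      exact ⟨x 0, by simp [Matrix.mulVec, dotProduct]⟩

theorem coker_period [Fintype G] (T u : G) (b n m k : ℕ) (h : CokerIs T u b n m) :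
    CokerIs T u b (n + 4 * k) m := by
  induction k with
  | zero => exact h
  | succ k ih => exact ih

/-- injectivity of the augmented differential -/
def DInj [Fintype G] (T u : G) (b n : ℕ) : Prop := ∀ y, dz T u b n *ᵥ y = 0 → y = 0

theorem inj1 [Fintype G] (T u : G) (b : ℕ) (hb : 1 ≤ b) : DInj T u b 1 := by
  rw [DInj, dz1]
  show ∀ y : Fin 2 → ℤ, (!![-3, 3; 2 * b - 3, 2] : Matrix (Fin 2) (Fin 2) ℤ) *ᵥ y = 0 → y = 0
  intro y hy
  have h0 := congrFun hy 0
  have h1 := congrFun hy 1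
  simp [Matrix.mulVec, dotProduct, Fin.sum_univ_two] at h0 h1
  have e : y 0 = y 1 := by linarith
  rw [← e] at h1
  have : (2 * (b : ℤ) - 1) * y 0 = 0 := by linear_combination h1
  have hb' : (2 * (b : ℤ) - 1) ≠ 0 := by omega
  have h2 : y 0 = 0 := by simpa [hb'] using this
  ext1 i
  fin_cases i
  · exact h2
  · exact e ▸ h2

theorem inj3 [Fintype G] (T u : G) (b : ℕ) : DInj T u b 3 := by
  rw [DInj, dz3]
  show ∀ y : Fin 1 → ℤ, (!![(Fintype.card G : ℤ)] : Matrix (Fin 1) (Fin 1) ℤ) *ᵥ y = 0 → y = 0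
  intro y hy
  have h0 := congrFun hy 0
  simp [Matrix.mulVec, dotProduct] at h0
  ext1 i
  fin_cases i
  exact h0

theorem inj_period [Fintype G] (T u : G) (b n k : ℕ) (h : DInj T u b n) :
    DInj T u b (n + 4 * k) := by
  induction k with
  | zero => exact h
  | succ k ih => exact ih

end Resolution

section Cat

open CategoryTheory Matrix

theorem rep_exact {k G : Type} [CommRing k] [Group G] (S : ShortComplex (Rep.{0} k G))
    (h : ∀ x, S.g.hom x = 0 → ∃ y, S.f.hom y = x) : S.Exact := by
  apply (forget₂ _ (ModuleCat k)).reflects_exact_of_faithful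
  rw [ShortComplex.moduleCat_exact_iff]
  exact h

variable {G : Type} [Group G]

/-- The free representation of rank `m`. -/
noncomputable def Xrep (m : ℕ) : Representation ℤ G (Fin m → MonoidAlgebra ℤ G) where
  toFun g :=
    { toFun := fun v i => ge g * v i
      map_add' := fun v w => by funext i; exact mul_add _ _ _
      map_smul' := fun n v => by
        funext i
        exact mul_smul_comm n (ge g) (v i) }
  map_one' := by
    refine LinearMap.ext fun v => funext fun i => ?_
    change ge 1 * v i = v i
    rw [ge_one, one_mul]
  map_mul' g h := by
    refine LinearMap.ext fun v => funext fun i => ?_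
    change ge (g * h) * v i = ge g * (ge h * v i)
    rw [ge_mul, mul_assoc]

noncomputable abbrev Xobj (G : Type) [Group G] (m : ℕ) : Rep ℤ G := Rep.of (Xrep (G := G) m)

theorem Xrep_apply (m : ℕ) (g : G) (v : Fin m → MonoidAlgebra ℤ G) :
    Xrep m g v = fun i => ge g * v i := rfl

noncomputable def matI {m n : ℕ} (M : Matrix (Fin m) (Fin n) (MonoidAlgebra ℤ G)) :
    (Xrep (G := G) m).IntertwiningMap (Xrep n) where
  toFun v := v ᵥ* M
  map_add' v w := Matrix.add_vecMul M v w
  map_smul' r v := by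
    funext j
    simp only [Matrix.vecMul, dotProduct, Pi.smul_apply, RingHom.id_apply, Finset.smul_sum]
    refine Finset.sum_congr rfl fun i _ => ?_
    exact smul_mul_assoc r (v i) (M i j)
  isIntertwining' g := by
    refine LinearMap.ext fun v => funext fun j => ?_
    change ((fun i => ge g * v i) ᵥ* M) j = ge g * (v ᵥ* M) j
    simp only [Matrix.vecMul, dotProduct, Finset.mul_sum, mul_assoc]

noncomputable def mat {m n : ℕ} (M : Matrix (Fin m) (Fin n) (MonoidAlgebra ℤ G)) :
    Xobj G m ⟶ Xobj G n := Rep.ofHom (matI M)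

theorem mat_apply {m n : ℕ} (M : Matrix (Fin m) (Fin n) (MonoidAlgebra ℤ G))
    (v : Fin m → MonoidAlgebra ℤ G) : (mat M).hom v = v ᵥ* M := rfl

theorem mat_comp_zero {l m n : ℕ} (M : Matrix (Fin l) (Fin m) (MonoidAlgebra ℤ G))
    (N : Matrix (Fin m) (Fin n) (MonoidAlgebra ℤ G)) (h : M * N = 0) : mat M ≫ mat N = 0 := by
  apply Rep.hom_ext
  refine DFunLike.ext _ _ fun v => ?_
  change (v ᵥ* M) ᵥ* N = 0
  rw [Matrix.vecMul_vecMul, h, Matrix.vecMul_zero]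

/-- The action of the group ring on a representation. -/
noncomputable def act {V : Type} [AddCommGroup V]
    (ρ : Representation ℤ G V) (a : MonoidAlgebra ℤ G) (x : V) : V := ρ.asAlgebraHom a x

section act
variable {V : Type} [AddCommGroup V] (ρ : Representation ℤ G V)

theorem act_add (a c : MonoidAlgebra ℤ G) (x : V) : act ρ (a + c) x = act ρ a x + act ρ c x := by
  unfold act; rw [map_add]; rfl

theorem act_zero (x : V) : act ρ 0 x = 0 := by
  unfold act; rw [map_zero]; rfl

theorem act_one (x : V) : act ρ 1 x = x := by
  unfold act; rw [map_one]; rfl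

theorem act_zsmul (r : ℤ) (a : MonoidAlgebra ℤ G) (x : V) :
    act ρ (r • a) x = r • (act ρ a x) := by
  let F : MonoidAlgebra ℤ G →+ V := ⟨⟨fun a => act ρ a x, act_zero ρ x⟩, fun a c => act_add ρ a c x⟩
  exact map_zsmul F r a

theorem act_mul (a c : MonoidAlgebra ℤ G) (x : V) : act ρ (a * c) x = act ρ a (act ρ c x) := by
  unfold act; rw [map_mul]; rfl

theorem act_ge (g : G) (x : V) : act ρ (ge g) x = ρ g x := by
  have h : ρ.asAlgebraHom (ge g) = ρ g := Representation.asAlgebraHom_of _ _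
  unfold act; rw [h]

end act

variable {V : Type} [AddCommGroup V]

/-- Homs out of a free representation. -/
noncomputable def homFromI {m : ℕ} (ρ : Representation ℤ G V) (y : Fin m → V) :
    (Xrep (G := G) m).IntertwiningMap ρ where
  toFun v := ∑ i, act ρ (v i) (y i)
  map_add' v w := by
    rw [← Finset.sum_add_distrib]
    exact Finset.sum_congr rfl fun i _ => act_add _ _ _ _
  map_smul' r v := by
    refine Eq.trans ?_ (Finset.smul_sum (r := r)).symm
    exact Finset.sum_congr rfl fun i _ => act_zsmul _ _ _ _
  isIntertwining' g := by
    refine LinearMap.ext fun v => ?_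
    change ∑ i, act ρ (ge g * v i) (y i) = ρ g (∑ i, act ρ (v i) (y i))
    refine Eq.trans ?_ (map_sum (ρ g) _ _).symm
    refine Finset.sum_congr rfl fun i _ => ?_
    rw [act_mul, act_ge]

noncomputable def homFrom {m : ℕ} (ρ : Representation ℤ G V) (y : Fin m → V) : Xobj G m ⟶ Rep.of ρ :=
  Rep.ofHom (homFromI ρ y)

theorem homFrom_apply {m : ℕ} (ρ : Representation ℤ G V) (y : Fin m → V) (v : Fin m → MonoidAlgebra ℤ G) :
    (homFrom ρ y).hom v = ∑ i, act ρ (v i) (y i) := rfl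

theorem hom_single {m : ℕ} (ρ : Representation ℤ G V) (f : Xobj G m ⟶ Rep.of ρ) (i : Fin m)
    (a : MonoidAlgebra ℤ G) :
    f.hom (Pi.single i a : Fin m → MonoidAlgebra ℤ G) = act ρ a
      (f.hom (Pi.single i 1 : Fin m → MonoidAlgebra ℤ G)) := by
  induction a using ga_ind with
  | h1 g =>
    rw [act_ge]
    refine Eq.trans ?_ (Rep.hom_comm_apply f g _)
    refine congrArg f.hom ?_
    change _ = fun j => ge g * (Pi.single i 1 : Fin m → MonoidAlgebra ℤ G) j
    funext j
    by_cases hj : j = i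
    · subst hj; simp
    · simp [hj]
  | h2 a b ha hb =>
    rw [Pi.single_add, act_add, ← ha, ← hb]
    exact map_add f.hom _ _
  | h3 n a ha =>
    have : (Pi.single i (n • a) : Fin m → MonoidAlgebra ℤ G) = n • Pi.single i a := by
      funext j
      by_cases hj : j = i
      · subst hj; simp [-zsmul_eq_mul]
      · simp [hj, -zsmul_eq_mul]
    rw [this, act_zsmul, ← ha]
    exact map_zsmul f.hom _ _

theorem hom_eq {m : ℕ} (ρ : Representation ℤ G V) (f : Xobj G m ⟶ Rep.of ρ) :
    f = homFrom ρ (fun i => f.hom (Pi.single i 1 : Fin m → MonoidAlgebra ℤ G)) := by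
  apply Rep.hom_ext
  refine DFunLike.ext _ _ fun v => ?_
  rw [homFrom_apply]
  have hv : v = ∑ i, (Pi.single i ((v : Fin m → MonoidAlgebra ℤ G) i) :
      Fin m → MonoidAlgebra ℤ G) := (Finset.univ_sum_single _).symm
  refine (congrArg f.hom hv).trans ?_
  refine (map_sum f.hom _ _).trans ?_
  exact Finset.sum_congr rfl fun i _ => hom_single ρ f i _

theorem homFrom_single {m : ℕ} (ρ : Representation ℤ G V) (y : Fin m → V) (i : Fin m) :
    (homFrom ρ y).hom (Pi.single i 1 : Fin m → MonoidAlgebra ℤ G) = y i := by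
  rw [homFrom_apply, Finset.sum_eq_single i]
  · rw [Pi.single_eq_same, act_one]
  · intro j _ hj
    rw [Pi.single_eq_of_ne hj, act_zero]
  · simp

instance Xproj (m : ℕ) : Projective (Xobj G m) where
  factors {E X} f e he := by
    obtain ⟨V, ρ⟩ := E
    rename_i iA iM
    obtain rfl : iM = AddCommGroup.toIntModule V := Subsingleton.elim _ _
    obtain ⟨W, σ⟩ := X
    rename_i iB iN
    obtain rfl : iN = AddCommGroup.toIntModule W := Subsingleton.elim _ _
    have hs := (Rep.epi_iff_surjective e).1 he
    choose y hy using fun i => hs (f.hom (Pi.single i 1 : Fin m → MonoidAlgebra ℤ G))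
    refine ⟨homFrom ρ y, ?_⟩
    rw [hom_eq _ (homFrom ρ y ≫ e), hom_eq _ f]
    congr 1
    funext i
    rw [← hy i]
    change e.hom ((homFrom ρ y).hom _) = _
    rw [homFrom_single]

noncomputable def epsI : (Xrep (G := G) 1).IntertwiningMap (Representation.trivial ℤ G ℤ) where
  toFun v := aug (v 0)
  map_add' v w := by simp
  map_smul' r v := by rw [Pi.smul_apply, map_smul]; rfl
  isIntertwining' g := by
    refine LinearMap.ext fun v => ?_
    change aug (ge g * v 0) = aug (v 0)
    simp

noncomputable def eps : Xobj G 1 ⟶ Rep.trivial ℤ G ℤ := Rep.ofHom epsI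

theorem eps_apply (v : Fin 1 → MonoidAlgebra ℤ G) : (eps (G := G)).hom v = aug (v 0) := rfl

variable [Fintype G] {T u : G} {b : ℕ}

noncomputable def cx (P : PData G T u b) : ChainComplex (Rep ℤ G) ℕ :=
  ChainComplex.of (fun n => Xobj G (rk n)) (fun n => mat (df T u b n))
    (fun n => mat_comp_zero _ _ (df_df P n))

theorem cx_d (P : PData G T u b) (n : ℕ) : (cx P).d (n + 1) n = mat (df T u b n) := by
  exact ChainComplex.of_d (fun n => Xobj G (rk n)) (fun n => mat (df T u b n)) n

theorem d_eps : mat (df T u b 0) ≫ eps = 0 := by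
  apply Rep.hom_ext
  refine DFunLike.ext _ _ fun v => ?_
  revert v
  change ∀ v : Fin 2 → MonoidAlgebra ℤ G,
    aug ((v ᵥ* (!![ge T - 1; ge u - 1] : Matrix (Fin 2) (Fin 1) (MonoidAlgebra ℤ G))) 0) = 0
  intro v
  simp [Matrix.vecMul, dotProduct, Fin.sum_univ_two]

noncomputable def cxpi (P : PData G T u b) :
    cx P ⟶ (ChainComplex.single₀ (Rep ℤ G)).obj (Rep.trivial ℤ G ℤ) :=
  ((cx P).toSingle₀Equiv _).symm ⟨eps, by rw [cx_d]; exact d_eps⟩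

theorem cxpi_f (P : PData G T u b) : (cxpi P).f 0 = eps :=
  ChainComplex.toSingle₀Equiv_symm_apply_f_zero _ _

theorem cx_quasiIso (P : PData G T u b) : QuasiIso (cxpi P) where
  quasiIsoAt m := by
    cases m with
    | zero =>
      rw [ChainComplex.quasiIsoAt₀_iff, ShortComplex.quasiIso_iff_of_zeros' _ rfl rfl rfl]
      constructor
      · apply rep_exact
        intro v hv
        have hv' : eps.hom v = 0 := by
          rw [← cxpi_f P]; exact hv
        revert v
        suffices ∀ v : Fin 1 → MonoidAlgebra ℤ G, aug (v 0) = 0 →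
            ∃ w : Fin 2 → MonoidAlgebra ℤ G, w ᵥ* df T u b 0 = v by
          intro v _ hv
          obtain ⟨w, hw⟩ := this v hv
          refine ⟨w, ?_⟩
          have : ((cx P).d 1 0).hom w = v := by
            rw [cx_d P]; exact hw
          exact this
        intro v hv
        obtain ⟨α, β, h⟩ := ker_aug_aux T u P.gen (v 0) hv
        refine ⟨![α, β], ?_⟩
        change ![α, β] ᵥ* (!![ge T - 1; ge u - 1] : Matrix (Fin 2) (Fin 1) (MonoidAlgebra ℤ G)) = v
        funext i
        fin_cases i
        simp [Matrix.vecMul, dotProduct, Fin.sum_univ_two, h]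
      · rw [Rep.epi_iff_surjective]
        intro x
        refine ⟨fun _ => algebraMap ℤ _ (x : ℤ), ?_⟩
        have : (cxpi P).f 0 = eps := cxpi_f P
        have h2 : ((cxpi P).f 0).hom (fun _ => algebraMap ℤ _ (x : ℤ)) = x := by
          rw [this]
          exact aug.commutes x
        exact h2
    | succ m =>
      rw [quasiIsoAt_iff_exactAt' (hL := ChainComplex.exactAt_succ_single_obj ..),
          HomologicalComplex.exactAt_iff' _ (m + 2) (m + 1) m (by simp) (by simp)]
      apply rep_exact
      intro v hv
      have hv' : (mat (df T u b m)).hom v = 0 := by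
        rw [← cx_d P]; exact hv
      obtain ⟨w, hw⟩ := df_exact P m v hv'
      refine ⟨w, ?_⟩
      have : ((cx P).d (m+2) (m+1)).hom w = v := by
        rw [cx_d P]; exact hw.symm
      exact this

noncomputable def resn (P : PData G T u b) : ProjectiveResolution (Rep.trivial ℤ G ℤ) where
  complex := cx P
  projective n := inferInstanceAs (Projective (Xobj G (rk n)))
  π := cxpi P
  quasiIso := cx_quasiIso P

theorem homology_equiv_aux {R : Type} [CommRing R] (S : ShortComplex (ModuleCat.{0} R))
    (hg : ∀ x, S.g.hom x = 0) {B : Type} [AddCommGroup B] [Module R B]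
    (φ : S.X₂ →ₗ[R] B) (hφ : Function.Surjective φ)
    (hk : ∀ y, φ y = 0 ↔ ∃ x, S.f.hom x = y) : Nonempty (S.homology ≃+ B) := by
  let ψ : LinearMap.ker S.g.hom →ₗ[R] B := φ.comp (LinearMap.ker S.g.hom).subtype
  have h1 : LinearMap.range S.moduleCatToCycles = LinearMap.ker ψ := by
    ext y
    constructor
    · rintro ⟨x, rfl⟩
      exact (hk _).2 ⟨x, rfl⟩
    · intro hy
      obtain ⟨x, hx⟩ := (hk y).1 hy
      exact ⟨x, Subtype.ext hx⟩
  have h2 : Function.Surjective ψ := by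
    intro z
    obtain ⟨y, hy⟩ := hφ z
    exact ⟨⟨y, hg y⟩, hy⟩
  exact ⟨(S.moduleCatHomologyIso.toLinearEquiv.trans
    ((Submodule.quotEquivOfEq _ _ h1).trans (ψ.quotKerEquivOfSurjective h2))).toAddEquiv⟩

theorem homology_equiv (S : ShortComplex (ModuleCat.{0} ℤ)) (hg : ∀ x, S.g.hom x = 0) (m : ℕ)
    (φ : S.X₂ →+ ZMod m) (hφ : Function.Surjective φ)
    (hk : ∀ y, φ y = 0 ↔ ∃ x, S.f.hom x = y) : Nonempty (S.homology ≃+ ZMod m) := by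
  let ψ : S.X₂ →ₗ[ℤ] ZMod m :=
    { toFun := φ
      map_add' := φ.map_add
      map_smul' := fun r x => by
        have := map_intCast_smul φ ℤ ℤ r x
        simpa only [Int.cast_id, RingHom.id_apply] using this }
  exact homology_equiv_aux S hg ψ hφ hk

theorem homology_subsingleton {R : Type} [CommRing R] (S : ShortComplex (ModuleCat.{0} R))
    (hg : ∀ x, S.g.hom x = 0 → x = 0) : Subsingleton S.homology := by
  have e := S.moduleCatHomologyIso.toLinearEquiv
  have : Subsingleton (LinearMap.ker S.g.hom) :=
    ⟨fun x y => Subtype.ext ((hg _ x.2).trans (hg _ y.2).symm)⟩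
  have : Subsingleton S.moduleCatLeftHomologyData.H :=
    inferInstanceAs (Subsingleton (LinearMap.ker S.g.hom ⧸ LinearMap.range S.moduleCatToCycles))
  exact e.toEquiv.subsingleton

theorem act_triv (a : MonoidAlgebra ℤ G) (x : ℤ) :
    act (Representation.trivial ℤ G ℤ) a x = aug a * x := by
  induction a using ga_ind with
  | h1 g => rw [act_ge, aug_ge, one_mul]; rfl
  | h2 a b ha hb => rw [act_add, ha, hb, map_add, add_mul]
  | h3 n a ha => rw [act_zsmul, ha, map_zsmul, smul_mul_assoc]

/-- Evaluation at the basis. -/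
noncomputable def ev (m : ℕ) : (Xobj G m ⟶ Rep.trivial ℤ G ℤ) →+ (Fin m → ℤ) where
  toFun f i := f.hom (Pi.single i 1 : Fin m → MonoidAlgebra ℤ G)
  map_zero' := rfl
  map_add' _ _ := rfl

theorem ev_inj (m : ℕ) : Function.Injective (ev (G := G) m) := by
  intro f g h
  rw [hom_eq _ f, hom_eq _ g]
  exact congrArg _ h

theorem ev_surj (m : ℕ) : Function.Surjective (ev (G := G) m) := by
  intro y
  exact ⟨homFrom _ y, funext fun i => homFrom_single _ y i⟩

theorem ev_mat {m n : ℕ} (M : Matrix (Fin m) (Fin n) (MonoidAlgebra ℤ G))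
    (f : Xobj G n ⟶ Rep.trivial ℤ G ℤ) : ev m (mat M ≫ f) = (M.map aug) *ᵥ ev n f := by
  funext i
  have h1 : ev m (mat M ≫ f) i = f.hom ((Pi.single i 1 : Fin m → MonoidAlgebra ℤ G) ᵥ* M) := rfl
  rw [h1, Matrix.single_one_vecMul]
  have h2 := hom_eq _ f
  have h3 : f.hom (M i) = ∑ j, act (Representation.trivial ℤ G ℤ) (M i j) (ev n f j) := by
    conv_lhs => rw [h2]
    rfl
  refine h3.trans ?_
  simp only [act_triv]
  rfl

theorem lin_d (P : PData G T u b) (n : ℕ) (f : Xobj G (rk n) ⟶ Rep.trivial ℤ G ℤ) :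
    ev (rk (n+1)) ((((resn P).complex.linearYonedaObj ℤ (Rep.trivial ℤ G ℤ)).d n (n+1)).hom f) =
      dz T u b n *ᵥ ev (rk n) f := by
  have : (((resn P).complex.linearYonedaObj ℤ (Rep.trivial ℤ G ℤ)).d n (n+1)).hom f =
    (cx P).d (n+1) n ≫ f := rfl
  rw [this, cx_d]
  exact ev_mat (df T u b n) f

noncomputable def Kc (P : PData G T u b) : CochainComplex (ModuleCat ℤ) ℕ :=
  (resn P).complex.linearYonedaObj ℤ (Rep.trivial ℤ G ℤ)

noncomputable def hiso (P : PData G T u b) (n : ℕ) :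
    groupCohomology (Rep.trivial ℤ G ℤ) n ≃+ (Kc P).homology n :=
  (groupCohomologyIso _ n (resn P)).toLinearEquiv.toAddEquiv

theorem coh_coker (P : PData G T u b) (n m : ℕ) (h : CokerIs T u b n m) :
    Nonempty (groupCohomology (Rep.trivial ℤ G ℤ) (n+1) ≃+ ZMod m) := by
  obtain ⟨h0, φ, hs, hk⟩ := h
  have e1 : (Kc P).homology (n+1) ≃+ ((Kc P).sc' n (n+1) (n+2)).homology :=
    (ShortComplex.homologyMapIso ((Kc P).isoSc' n (n+1) (n+2) (by simp) (by simp))).toLinearEquiv.toAddEquiv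
  obtain ⟨e2⟩ := homology_equiv ((Kc P).sc' n (n+1) (n+2))
    (fun f => ev_inj _ (by
      refine (lin_d P (n+1) f).trans ?_
      rw [h0, Matrix.zero_mulVec]
      exact (map_zero (ev (G := G) _)).symm)) m
    (φ.toAddMonoidHom.comp (ev (rk (n+1))))
    (hs.comp (ev_surj _)) (by
      intro y
      refine (hk (ev _ y)).trans ?_
      constructor
      · rintro ⟨x, hx⟩
        obtain ⟨f, rfl⟩ := ev_surj (G := G) _ x
        exact ⟨f, ev_inj _ ((lin_d P n f).trans hx.symm)⟩
      · rintro ⟨f, hf⟩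
        refine ⟨ev _ f, ?_⟩
        rw [← lin_d P n f]
        exact congrArg (ev _) hf.symm)
  exact ⟨((hiso P (n+1)).trans e1).trans e2⟩

theorem coh_zero (P : PData G T u b) :
    Nonempty (groupCohomology (Rep.trivial ℤ G ℤ) 0 ≃+ ℤ) := by
  have e1 : (Kc P).homology 0 ≃+ ((Kc P).sc' 0 0 1).homology :=
    (ShortComplex.homologyMapIso ((Kc P).isoSc' 0 0 1 (by simp) (by simp))).toLinearEquiv.toAddEquiv
  let π : (Fin 1 → ℤ) →+ ZMod 0 := ⟨⟨fun v => v 0, rfl⟩, fun _ _ => rfl⟩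
  obtain ⟨e2⟩ := homology_equiv ((Kc P).sc' 0 0 1)
    (fun f => ev_inj _ (by
      refine (lin_d P 0 f).trans ?_
      rw [dz0, Matrix.zero_mulVec]
      exact (map_zero (ev (G := G) _)).symm)) 0
    (π.comp (ev 1))
    (by
      intro z
      obtain ⟨f, hf⟩ := ev_surj (G := G) 1 (fun _ => z)
      exact ⟨f, congrFun hf 0⟩) (by
      have hd : (Kc P).d 0 0 = 0 := (Kc P).shape _ _ (by simp)
      intro y
      constructor
      · intro hy
        refine ⟨0, ?_⟩
        rw [map_zero]
        apply ev_inj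
        refine (map_zero (ev (G := G) _)).trans ?_
        funext i
        fin_cases i
        exact hy.symm
      · rintro ⟨f, rfl⟩
        have : ((Kc P).d 0 0).hom f = 0 := by rw [hd]; rfl
        change (π.comp (ev 1)) (((Kc P).d 0 0).hom f) = 0
        rw [this]
        exact map_zero (π.comp (ev 1)))
  exact ⟨((hiso P 0).trans e1).trans e2⟩

theorem coh_inj (P : PData G T u b) (n : ℕ) (h : DInj T u b (n+1)) :
    Subsingleton (groupCohomology (Rep.trivial ℤ G ℤ) (n+1)) := by
  have e1 : (Kc P).homology (n+1) ≃+ ((Kc P).sc' n (n+1) (n+2)).homology :=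
    (ShortComplex.homologyMapIso ((Kc P).isoSc' n (n+1) (n+2) (by simp) (by simp))).toLinearEquiv.toAddEquiv
  have : Subsingleton ((Kc P).sc' n (n+1) (n+2)).homology := by
    apply homology_subsingleton
    intro f hf
    apply ev_inj
    refine Eq.trans ?_ (map_zero (ev (G := G) _)).symm
    apply h
    rw [← lin_d P (n+1) f]
    exact (congrArg (ev _) hf).trans (map_zero _)
  exact ((hiso P (n+1)).trans e1).toEquiv.subsingleton

end Cat

/-- the integral cohomology of the generalized binary tetrahedral group
`G = P'_{8·3^s}` is `ℤ` in degree `0`, `ℤ/8·3^s` in positive degrees `≡ 0 (mod 4)`, `0` in odd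
degrees and `ℤ/3^s` in degrees `≡ 2 (mod 4)`. -/
theorem stmt17 (s : ℕ) (hs : 2 ≤ s) :
    Nonempty ((groupCohomology (Rep.trivial ℤ (PresentedGroup (rels s)) ℤ) 0) ≃+ ℤ) ∧
    (∀ n : ℕ, 0 < n → n % 4 = 0 →
      Nonempty ((groupCohomology (Rep.trivial ℤ (PresentedGroup (rels s)) ℤ) n) ≃+
        ZMod (8 * 3 ^ s))) ∧
    (∀ n : ℕ, Odd n →
      Subsingleton (groupCohomology (Rep.trivial ℤ (PresentedGroup (rels s)) ℤ) n)) ∧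
    (∀ n : ℕ, n % 4 = 2 →
      Nonempty ((groupCohomology (Rep.trivial ℤ (PresentedGroup (rels s)) ℤ) n) ≃+
        ZMod (3 ^ s))) := by
  obtain ⟨t, rfl⟩ : ∃ t, s = t + 2 := ⟨s - 2, by omega⟩
  obtain ⟨j, hj⟩ : Odd (3 ^ t) := Odd.pow (by decide)
  have hj' : 3 ^ (t + 2) = 9 * (2 * j + 1) := by rw [pow_add, hj]; ring
  obtain ⟨T, u, P⟩ := pg_data (t + 2) j hj'
  obtain ⟨hfin, hcard⟩ := pg_card (t + 2) (by omega)
  haveI := Fintype.ofFinite (PresentedGroup (rels (t + 2)))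
  rw [Nat.card_eq_fintype_card] at hcard
  refine ⟨coh_zero P, ?_, ?_, ?_⟩
  · intro n hn h4
    obtain ⟨k, rfl⟩ : ∃ k, n = (3 + 4 * k) + 1 := ⟨n / 4 - 1, by omega⟩
    rw [← hcard]
    exact coh_coker P _ _ (coker_period T u _ 3 _ k (coker3 T u _))
  · intro n hn
    rw [Nat.odd_iff] at hn
    by_cases h : n % 4 = 1
    · obtain ⟨k, rfl⟩ : ∃ k, n = 4 * k + 1 := ⟨n / 4, by omega⟩
      refine coh_inj P _ ?_
      rw [show 4 * k + 1 = 1 + 4 * k by ring]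
      exact inj_period T u _ 1 k (inj1 T u _ (by omega))
    · obtain ⟨k, rfl⟩ : ∃ k, n = (2 + 4 * k) + 1 := ⟨n / 4, by omega⟩
      refine coh_inj P _ ?_
      rw [show 2 + 4 * k + 1 = 3 + 4 * k by ring]
      exact inj_period T u _ 3 k (inj3 T u _)
  · intro n h4
    obtain ⟨k, rfl⟩ : ∃ k, n = (1 + 4 * k) + 1 := ⟨n / 4, by omega⟩
    exact coh_coker P _ _ (coker_period T u _ 1 _ k (coker1 T u _ _ (by omega)))
end

section
/- Let G be a finite group containing a subgroup isomorphic to the quaternion group Q₈ of order 8. Let ⋯ → F₂ → F₁ → F₀ → ℤ → 0 be any exact sequence (free resolution) of ℤ[G]-modules in which each F_h is a finitely generated free ℤ[G]-module of rank f_h, and ℤ carries the trivial G-action. Then for every h ≥ 0: f_h ≥ 1 if h ≡ 0 or 3 (mod 4), and f_h ≥ 2 if h ≡ 1 or 2 (mod 4). -/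
namespace Q8Res

open QuaternionGroup

abbrev Q := QuaternionGroup 2

/-- A function on `Q₈` from its list of values. -/
def mkF (c0 c1 c2 c3 c4 c5 c6 c7 : ℤ) : Q → ℤ
  | .a i => (![c0, c1, c2, c3] : Fin 4 → ℤ) i
  | .xa i => (![c4, c5, c6, c7] : Fin 4 → ℤ) i

theorem forallQ (P : Q → Prop) : (∀ q, P q) ↔
    (P (a 0) ∧ P (a 1) ∧ P (a 2) ∧ P (a 3)) ∧ (P (xa 0) ∧ P (xa 1) ∧ P (xa 2) ∧ P (xa 3)) := by
  constructor
  · intro h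
    exact ⟨⟨h _, h _, h _, h _⟩, ⟨h _, h _, h _, h _⟩⟩
  · rintro ⟨⟨h0, h1, h2, h3⟩, h4, h5, h6, h7⟩ q
    rcases q with i | i
    · change Fin 4 at i
      fin_cases i
      exacts [h0, h1, h2, h3]
    · change Fin 4 at i
      fin_cases i
      exacts [h4, h5, h6, h7]

theorem sumQ (p : Q → ℤ) : ∑ q, p q =
    p (a 0) + p (a 1) + p (a 2) + p (a 3) + (p (xa 0) + p (xa 1) + p (xa 2) + p (xa 3)) := by
  have : (Finset.univ : Finset Q) = {a 0, a 1, a 2, a 3, xa 0, xa 1, xa 2, xa 3} := by decide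
  rw [this]
  repeat rw [Finset.sum_insert (by decide)]
  rw [Finset.sum_singleton]
  ring

/-- generators -/
abbrev gx : Q := a 1
abbrev gy : Q := xa 0

section tables
theorem x0 : gx * a 0 = a 1 := by decide
theorem x1 : gx * a 1 = a 2 := by decide
theorem x2 : gx * a 2 = a 3 := by decide
theorem x3 : gx * a 3 = a 0 := by decide
theorem x4 : gx * xa 0 = xa 3 := by decide
theorem x5 : gx * xa 1 = xa 0 := by decide
theorem x6 : gx * xa 2 = xa 1 := by decide
theorem x7 : gx * xa 3 = xa 2 := by decide
theorem y0 : gy * a 0 = xa 0 := by decide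
theorem y1 : gy * a 1 = xa 1 := by decide
theorem y2 : gy * a 2 = xa 2 := by decide
theorem y3 : gy * a 3 = xa 3 := by decide
theorem y4 : gy * xa 0 = a 2 := by decide
theorem y5 : gy * xa 1 = a 3 := by decide
theorem y6 : gy * xa 2 = a 0 := by decide
theorem y7 : gy * xa 3 = a 1 := by decide
variable (c0 c1 c2 c3 c4 c5 c6 c7 : ℤ)
theorem m0 : mkF c0 c1 c2 c3 c4 c5 c6 c7 (a 0) = c0 := rfl
theorem m1 : mkF c0 c1 c2 c3 c4 c5 c6 c7 (a 1) = c1 := rfl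
theorem m2 : mkF c0 c1 c2 c3 c4 c5 c6 c7 (a 2) = c2 := rfl
theorem m3 : mkF c0 c1 c2 c3 c4 c5 c6 c7 (a 3) = c3 := rfl
theorem m4 : mkF c0 c1 c2 c3 c4 c5 c6 c7 (xa 0) = c4 := rfl
theorem m5 : mkF c0 c1 c2 c3 c4 c5 c6 c7 (xa 1) = c5 := rfl
theorem m6 : mkF c0 c1 c2 c3 c4 c5 c6 c7 (xa 2) = c6 := rfl
theorem m7 : mkF c0 c1 c2 c3 c4 c5 c6 c7 (xa 3) = c7 := rfl
end tables

theorem E0 (p : Q → ℤ) (h1 : ∀ q, p (gx * q) - p q = 0) (h2 : ∀ q, p (gy * q) - p q = 0) :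
    ∃ w : Q → ℤ, ∀ q, ∑ g, w (g * q) = p q := by
  refine ⟨mkF (p (a 0)) 0 0 0 0 0 0 0, ?_⟩
  have hs : ∀ q, ∑ g, mkF (p (a 0)) 0 0 0 0 0 0 0 (g * q) = p (a 0) := by
    intro q
    rw [Fintype.sum_equiv (Equiv.mulRight q) (fun g => mkF (p (a 0)) 0 0 0 0 0 0 0 (g * q))
      (mkF (p (a 0)) 0 0 0 0 0 0 0) (fun _ => rfl), sumQ]
    simp only [m0, m1, m2, m3, m4, m5, m6, m7]
    ring
  simp only [hs]
  rw [forallQ] at h1 h2 ⊢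
  simp only [x0, x1, x2, x3, x4, x5, x6, x7, y0, y1, y2, y3, y4, y5, y6, y7] at h1 h2 ⊢
  refine ⟨⟨?_, ?_, ?_, ?_⟩, ?_, ?_, ?_, ?_⟩ <;> first | trivial | omega

theorem E1 (p r : Q → ℤ) (h1 : ∀ q, p q + p (gx * q) - (r (gy * q) + r q) = 0)
    (h2 : ∀ q, p (gy * (gx * q)) + p q + (r (gx * q) - r q) = 0) :
    ∃ w : Q → ℤ, ∀ q, w (gx * q) - w q = p q ∧ w (gy * q) - w q = r q := by
  refine ⟨mkF (-p (xa 0) - r (a 0)) (p (a 0) - p (xa 0) - r (a 0))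
    (p (a 0) + p (a 1) - p (xa 0) - r (a 0)) (p (a 0) + p (a 1) + p (a 2) - p (xa 0) - r (a 0))
    (-p (xa 0)) (-p (xa 0) - p (xa 1)) (-p (xa 0) - p (xa 1) - p (xa 2)) 0, ?_⟩
  rw [forallQ] at h1 h2 ⊢
  simp only [x0, x1, x2, x3, x4, x5, x6, x7, y0, y1, y2, y3, y4, y5, y6, y7] at h1 h2 ⊢
  simp only [m0, m1, m2, m3, m4, m5, m6, m7]
  omega

theorem E2 (p r : Q → ℤ)
    (h1 : ∀ q, p (gx * q) - p q - (r (gy * (gx * q)) - r q) = 0) :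
    ∃ w v : Q → ℤ, ∀ q, w q + w (gx * q) - (v (gy * q) + v q) = p q ∧
      w (gy * (gx * q)) + w q + (v (gx * q) - v q) = r q := by
  refine ⟨mkF (-p (xa 2) + p (xa 3) + r (a 0)) (-p (xa 3) + r (a 1)) (r (a 2)) (p (a 2) - r (a 2))
    (p (xa 0)) (-p (a 0) + p (a 1) + r (a 0) - r (a 2)) (-p (a 1) + r (a 1) + r (a 2)) 0,
    mkF (-p (a 0) - p (xa 2) + r (a 0) + r (a 1)) (-p (a 1) - p (xa 3) + r (a 1) + r (a 2))
    0 0 0 0 0 0, ?_⟩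
  rw [forallQ] at h1 ⊢
  simp only [x0, x1, x2, x3, x4, x5, x6, x7, y0, y1, y2, y3, y4, y5, y6, y7] at h1 ⊢
  simp only [m0, m1, m2, m3, m4, m5, m6, m7]
  omega

theorem E3 (p : Q → ℤ) (h1 : ∀ q, ∑ g, p (g * q) = 0) :
    ∃ w v : Q → ℤ, ∀ q, w (gx * q) - w q - (v (gy * (gx * q)) - v q) = p q := by
  refine ⟨mkF (p (a 3)) (-p (a 1) - p (a 2)) (-p (a 2)) 0 (-p (xa 0))
    (p (a 0) + p (a 1) + p (a 2) + p (a 3) + p (xa 2) + p (xa 3))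
    (p (a 0) + p (a 1) + p (a 2) + p (a 3) + p (xa 3)) 0,
    mkF (p (a 0) + p (a 1) + p (a 2) + p (a 3)) 0 0 0 0 0 0 0, ?_⟩
  have h := h1 1
  simp only [mul_one] at h
  rw [sumQ] at h
  rw [forallQ]
  simp only [x0, x1, x2, x3, x4, x5, x6, x7, y0, y1, y2, y3, y4, y5, y6, y7]
  simp only [m0, m1, m2, m3, m4, m5, m6, m7]
  omega

/-- `G` is a free left `Q₈`-set. -/
theorem exists_equiv {G : Type} [Group G] (φ : Q →* G) (hφ : Function.Injective φ) :
    ∃ (T : Type) (e : G ≃ Q × T), ∀ q q' t, φ q * e.symm (q', t) = e.symm (q * q', t) := by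
  let s : Setoid G := QuotientGroup.rightRel φ.range
  have hrel : ∀ u v : G, s u v ↔ ∃ q, φ q * u = v := by
    intro u v
    change QuotientGroup.rightRel φ.range u v ↔ _
    rw [QuotientGroup.rightRel_apply]
    constructor
    · rintro ⟨q, hq⟩
      exact ⟨q, by rw [hq]; group⟩
    · rintro ⟨q, hq⟩
      exact ⟨q, by rw [← hq]; group⟩
  let F : Q × Quotient s → G := fun z => φ z.1 * z.2.out
  have hmk : ∀ z : Q × Quotient s, Quotient.mk s (F z) = z.2 := by
    intro z
    conv_rhs => rw [← Quotient.out_eq z.2]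
    exact (Quotient.sound ((hrel _ _).2 ⟨z.1, rfl⟩)).symm
  have hF : Function.Bijective F := by
    constructor
    · intro z z' h
      have h2 : z.2 = z'.2 := by rw [← hmk z, ← hmk z', h]
      have h1 : z.1 = z'.1 := by
        apply hφ
        have : φ z.1 * z.2.out = φ z'.1 * z'.2.out := h
        rw [h2] at this
        exact mul_right_cancel this
      exact Prod.ext h1 h2
    · intro u
      obtain ⟨q, hq⟩ := (hrel _ _).1 (Quotient.exact (Quotient.out_eq (Quotient.mk s u)))
      exact ⟨(q, Quotient.mk s u), hq⟩
  refine ⟨Quotient s, (Equiv.ofBijective F hF).symm, ?_⟩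
  intro q q' t
  simp [F, mul_assoc]

open MonoidAlgebra in
/-- The norm element of `Q₈`. -/
noncomputable def NQ {G : Type} [Group G] (φ : Q →* G) : MonoidAlgebra ℤ G :=
  ∑ q, of ℤ G (φ q)

noncomputable def X {G : Type} [Group G] (φ : Q →* G) : MonoidAlgebra ℤ G :=
  MonoidAlgebra.of ℤ G (φ gx)⁻¹

noncomputable def Y {G : Type} [Group G] (φ : Q →* G) : MonoidAlgebra ℤ G :=
  MonoidAlgebra.of ℤ G (φ gy)⁻¹

section ring
variable {G : Type} [Group G] (φ : Q →* G)

theorem XX : X φ * X φ = Y φ * Y φ := by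
  simp only [X, Y, ← map_mul, ← map_inv]
  congr 2

theorem XYX : X φ * Y φ * X φ = Y φ := by
  simp only [X, Y, ← map_mul, ← map_inv]
  congr 2

theorem ofN (q : Q) : MonoidAlgebra.of ℤ G (φ q) * NQ φ = NQ φ := by
  simp only [NQ, Finset.mul_sum, ← map_mul]
  exact Fintype.sum_equiv (Equiv.mulLeft q) _ _ (fun _ => rfl)

theorem Nof (q : Q) : NQ φ * MonoidAlgebra.of ℤ G (φ q) = NQ φ := by
  simp only [NQ, Finset.sum_mul, ← map_mul]
  exact Fintype.sum_equiv (Equiv.mulRight q) _ _ (fun _ => rfl)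

theorem XN : X φ * NQ φ = NQ φ := by
  rw [X, ← map_inv, ofN]
theorem YN : Y φ * NQ φ = NQ φ := by
  rw [Y, ← map_inv, ofN]
theorem NX : NQ φ * X φ = NQ φ := by
  rw [X, ← map_inv, Nof]
theorem NY : NQ φ * Y φ = NQ φ := by
  rw [Y, ← map_inv, Nof]

variable {n : ℕ}

/-- coefficients of `x : ℤ[G]^n` -/
noncomputable def cf {G : Type} {n : ℕ} (m : Fin n → MonoidAlgebra ℤ G) (i : Fin n) (u : G) : ℤ :=
  (m i).coeff u

theorem cf_ext {G : Type} {n : ℕ} {m m' : Fin n → MonoidAlgebra ℤ G} (h : ∀ i u, cf m i u = cf m' i u) : m = m' := by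
  funext i
  apply MonoidAlgebra.coeff_injective
  ext u
  exact h i u

theorem cf_add (m m' : Fin n → MonoidAlgebra ℤ G) (i : Fin n) (u : G) :
    cf (m + m') i u = cf m i u + cf m' i u := by
  simp [cf]

theorem cf_sub (m m' : Fin n → MonoidAlgebra ℤ G) (i : Fin n) (u : G) :
    cf (m - m') i u = cf m i u - cf m' i u := by
  simp [cf]

theorem cf_zsmul {G : Type} {n : ℕ} (c : ℤ) (m : Fin n → MonoidAlgebra ℤ G) (i : Fin n) (u : G) :
    cf (c • m) i u = c * cf m i u :=
  rfl

theorem cf_zero (i : Fin n) (u : G) :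
    cf (0 : Fin n → MonoidAlgebra ℤ G) i u = 0 := by
  simp [cf]

theorem cf_of (g : G) (m : Fin n → MonoidAlgebra ℤ G) (i : Fin n) (u : G) :
    cf (MonoidAlgebra.of ℤ G g • m) i u = cf m i (g⁻¹ * u) := by
  simp [cf, MonoidAlgebra.of]

theorem cf_X (m : Fin n → MonoidAlgebra ℤ G) (i : Fin n) (u : G) :
    cf (X φ • m) i u = cf m i (φ gx * u) := by
  rw [X, cf_of, inv_inv]

theorem cf_Y (m : Fin n → MonoidAlgebra ℤ G) (i : Fin n) (u : G) :
    cf (Y φ • m) i u = cf m i (φ gy * u) := by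
  rw [Y, cf_of, inv_inv]

theorem cf_N (m : Fin n → MonoidAlgebra ℤ G) (i : Fin n) (u : G) :
    cf (NQ φ • m) i u = ∑ q, cf m i (φ q * u) := by
  have : cf (NQ φ • m) i u = ∑ q, cf (MonoidAlgebra.of ℤ G (φ q) • m) i u := by
    simp [cf, NQ, Finset.sum_mul, MonoidAlgebra.coeff_sum]
  rw [this]
  simp only [cf_of]
  exact Fintype.sum_equiv (Equiv.inv Q) _ _ (fun q => by simp)

theorem exists_cf {G : Type} [Finite G] {n : ℕ} (w : Fin n → G → ℤ) :
    ∃ m : Fin n → MonoidAlgebra ℤ G, ∀ i u, cf m i u = w i u :=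
  ⟨fun i => MonoidAlgebra.ofCoeff (Finsupp.equivFunOnFinite.symm (w i)), fun i u => by simp [cf]⟩

theorem F0 [Finite G] (hφ : Function.Injective φ) (m : Fin n → MonoidAlgebra ℤ G) (h1 : (X φ - 1) • m = 0) (h2 : (Y φ - 1) • m = 0) :
    ∃ w, NQ φ • w = m := by
  obtain ⟨T, e, he⟩ := exists_equiv φ hφ
  have key := fun i t => E0 (fun q => cf m i (e.symm (q, t)))
    (fun q => by
      have := congrArg (fun z => cf z i (e.symm (q, t))) h1
      simpa [sub_smul, cf_sub, cf_X, cf_zero, he] using this)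
    (fun q => by
      have := congrArg (fun z => cf z i (e.symm (q, t))) h2
      simpa [sub_smul, cf_sub, cf_Y, cf_zero, he] using this)
  choose w hw using key
  obtain ⟨W, hW⟩ := exists_cf (fun i u => w i (e u).2 (e u).1)
  refine ⟨W, cf_ext fun i u => ?_⟩
  obtain ⟨⟨q, t⟩, rfl⟩ := e.symm.surjective u
  have := hw i t q
  simpa only [cf_N, he, hW, Equiv.apply_symm_apply] using this

theorem F1 [Finite G] (hφ : Function.Injective φ) (m l : Fin n → MonoidAlgebra ℤ G)
    (h1 : (1 + X φ) • m - (Y φ + 1) • l = 0) (h2 : (X φ * Y φ + 1) • m + (X φ - 1) • l = 0) :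
    ∃ w, (X φ - 1) • w = m ∧ (Y φ - 1) • w = l := by
  obtain ⟨T, e, he⟩ := exists_equiv φ hφ
  have key := fun i t => E1 (fun q => cf m i (e.symm (q, t))) (fun q => cf l i (e.symm (q, t)))
    (fun q => by
      have := congrArg (fun z => cf z i (e.symm (q, t))) h1
      simpa only [sub_smul, add_smul, mul_smul, one_smul, cf_sub, cf_add, cf_X, cf_Y, cf_zero, he]
        using this)
    (fun q => by
      have := congrArg (fun z => cf z i (e.symm (q, t))) h2
      simpa only [sub_smul, add_smul, mul_smul, one_smul, cf_sub, cf_add, cf_X, cf_Y, cf_zero, he]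
        using this)
  choose w hw using key
  obtain ⟨W, hW⟩ := exists_cf (fun i u => w i (e u).2 (e u).1)
  refine ⟨W, cf_ext fun i u => ?_, cf_ext fun i u => ?_⟩
  · obtain ⟨⟨q, t⟩, rfl⟩ := e.symm.surjective u
    have := (hw i t q).1
    simpa only [sub_smul, add_smul, mul_smul, one_smul, cf_sub, cf_add, cf_X, cf_Y, he, hW,
      Equiv.apply_symm_apply] using this
  · obtain ⟨⟨q, t⟩, rfl⟩ := e.symm.surjective u
    have := (hw i t q).2
    simpa only [sub_smul, add_smul, mul_smul, one_smul, cf_sub, cf_add, cf_X, cf_Y, he, hW,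
      Equiv.apply_symm_apply] using this

theorem F2 [Finite G] (hφ : Function.Injective φ) (m l : Fin n → MonoidAlgebra ℤ G)
    (h1 : (X φ - 1) • m - (X φ * Y φ - 1) • l = 0) :
    ∃ w v, (1 + X φ) • w - (Y φ + 1) • v = m ∧ (X φ * Y φ + 1) • w + (X φ - 1) • v = l := by
  obtain ⟨T, e, he⟩ := exists_equiv φ hφ
  have key := fun i t => E2 (fun q => cf m i (e.symm (q, t))) (fun q => cf l i (e.symm (q, t)))
    (fun q => by
      have := congrArg (fun z => cf z i (e.symm (q, t))) h1
      simpa only [sub_smul, add_smul, mul_smul, one_smul, cf_sub, cf_add, cf_X, cf_Y, cf_zero, he]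
        using this)
  choose w v hw using key
  obtain ⟨W, hW⟩ := exists_cf (fun i u => w i (e u).2 (e u).1)
  obtain ⟨V, hV⟩ := exists_cf (fun i u => v i (e u).2 (e u).1)
  refine ⟨W, V, cf_ext fun i u => ?_, cf_ext fun i u => ?_⟩
  · obtain ⟨⟨q, t⟩, rfl⟩ := e.symm.surjective u
    have := (hw i t q).1
    simpa only [sub_smul, add_smul, mul_smul, one_smul, cf_sub, cf_add, cf_X, cf_Y, he, hW, hV,
      Equiv.apply_symm_apply] using this
  · obtain ⟨⟨q, t⟩, rfl⟩ := e.symm.surjective u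
    have := (hw i t q).2
    simpa only [sub_smul, add_smul, mul_smul, one_smul, cf_sub, cf_add, cf_X, cf_Y, he, hW, hV,
      Equiv.apply_symm_apply] using this

theorem F3 [Finite G] (hφ : Function.Injective φ) (m : Fin n → MonoidAlgebra ℤ G)
    (h1 : NQ φ • m = 0) :
    ∃ w v, (X φ - 1) • w - (X φ * Y φ - 1) • v = m := by
  obtain ⟨T, e, he⟩ := exists_equiv φ hφ
  have key := fun i t => E3 (fun q => cf m i (e.symm (q, t)))
    (fun q => by
      have := congrArg (fun z => cf z i (e.symm (q, t))) h1
      simpa only [cf_N, cf_zero, he] using this)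
  choose w v hw using key
  obtain ⟨W, hW⟩ := exists_cf (fun i u => w i (e u).2 (e u).1)
  obtain ⟨V, hV⟩ := exists_cf (fun i u => v i (e u).2 (e u).1)
  refine ⟨W, V, cf_ext fun i u => ?_⟩
  obtain ⟨⟨q, t⟩, rfl⟩ := e.symm.surjective u
  have := hw i t q
  simpa only [sub_smul, add_smul, mul_smul, one_smul, cf_sub, cf_add, cf_X, cf_Y, he, hW, hV,
      Equiv.apply_symm_apply] using this

/-! Identities expressing that the periodic complex is a complex. -/

theorem c01 {M : Type} [AddCommGroup M] [Module (MonoidAlgebra ℤ G) M] (y : M) :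
    (1 + X φ) • ((X φ - 1) • y) - (Y φ + 1) • ((Y φ - 1) • y) = 0 ∧
    (X φ * Y φ + 1) • ((X φ - 1) • y) + (X φ - 1) • ((Y φ - 1) • y) = 0 := by
  simp only [← mul_smul, ← sub_smul, ← add_smul]
  have h1 : (1 + X φ) * (X φ - 1) - (Y φ + 1) * (Y φ - 1) = 0 := by
    have : (1 + X φ) * (X φ - 1) - (Y φ + 1) * (Y φ - 1) = X φ * X φ - Y φ * Y φ := by noncomm_ring
    rw [this, XX, sub_self]
  have h2 : (X φ * Y φ + 1) * (X φ - 1) + (X φ - 1) * (Y φ - 1) = 0 := by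
    have : (X φ * Y φ + 1) * (X φ - 1) + (X φ - 1) * (Y φ - 1) = X φ * Y φ * X φ - Y φ := by
      noncomm_ring
    rw [this, XYX, sub_self]
  rw [h1, h2]
  simp

theorem c12 {M : Type} [AddCommGroup M] [Module (MonoidAlgebra ℤ G) M] (y z : M) :
    (X φ - 1) • ((1 + X φ) • y - (Y φ + 1) • z) -
      (X φ * Y φ - 1) • ((X φ * Y φ + 1) • y + (X φ - 1) • z) = 0 := by
  have h1 : (X φ - 1) * (1 + X φ) - (X φ * Y φ - 1) * (X φ * Y φ + 1) = 0 := by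
    have : (X φ - 1) * (1 + X φ) - (X φ * Y φ - 1) * (X φ * Y φ + 1) =
      X φ * X φ - (X φ * Y φ * X φ) * Y φ := by noncomm_ring
    rw [this, XYX, XX, sub_self]
  have h2 : (X φ - 1) * (Y φ + 1) + (X φ * Y φ - 1) * (X φ - 1) = 0 := by
    have : (X φ - 1) * (Y φ + 1) + (X φ * Y φ - 1) * (X φ - 1) = X φ * Y φ * X φ - Y φ := by
      noncomm_ring
    rw [this, XYX, sub_self]
  calc _ = ((X φ - 1) * (1 + X φ) - (X φ * Y φ - 1) * (X φ * Y φ + 1)) • y -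
      ((X φ - 1) * (Y φ + 1) + (X φ * Y φ - 1) * (X φ - 1)) • z := by
        simp only [sub_smul _ _ y, add_smul _ _ z, mul_smul, smul_sub, smul_add]
        abel
    _ = 0 := by rw [h1, h2]; simp

theorem c23 {M : Type} [AddCommGroup M] [Module (MonoidAlgebra ℤ G) M] (y z : M) :
    NQ φ • ((X φ - 1) • y - (X φ * Y φ - 1) • z) = 0 := by
  rw [smul_sub, ← mul_smul, ← mul_smul]
  have h1 : NQ φ * (X φ - 1) = 0 := by rw [mul_sub, NX, mul_one, sub_self]
  have h2 : NQ φ * (X φ * Y φ - 1) = 0 := by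
    rw [mul_sub, ← mul_assoc, NX, NY, mul_one, sub_self]
  rw [h1, h2]
  simp

theorem c30 {M : Type} [AddCommGroup M] [Module (MonoidAlgebra ℤ G) M] (y : M) :
    (X φ - 1) • (NQ φ • y) = 0 ∧ (Y φ - 1) • (NQ φ • y) = 0 := by
  simp only [← mul_smul, sub_mul, XN, YN, one_mul, sub_self, zero_smul, and_self]

/-! The degree `r` Tate cohomology of `S` is killed by `2`. -/

def K0 (S : Submodule ℤ (Fin n → MonoidAlgebra ℤ G)) : Prop :=
  ∀ x ∈ S, (X φ - 1) • x = 0 → (Y φ - 1) • x = 0 → ∃ y ∈ S, NQ φ • y = (2 : ℤ) • x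

def K1 (S : Submodule ℤ (Fin n → MonoidAlgebra ℤ G)) : Prop :=
  ∀ x ∈ S, ∀ z ∈ S, (1 + X φ) • x - (Y φ + 1) • z = 0 →
    (X φ * Y φ + 1) • x + (X φ - 1) • z = 0 →
    ∃ y ∈ S, (X φ - 1) • y = (2 : ℤ) • x ∧ (Y φ - 1) • y = (2 : ℤ) • z

def K2 (S : Submodule ℤ (Fin n → MonoidAlgebra ℤ G)) : Prop :=
  ∀ x ∈ S, ∀ z ∈ S, (X φ - 1) • x - (X φ * Y φ - 1) • z = 0 →
    ∃ y ∈ S, ∃ t ∈ S, (1 + X φ) • y - (Y φ + 1) • t = (2 : ℤ) • x ∧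
      (X φ * Y φ + 1) • y + (X φ - 1) • t = (2 : ℤ) • z

def K3 (S : Submodule ℤ (Fin n → MonoidAlgebra ℤ G)) : Prop :=
  ∀ x ∈ S, NQ φ • x = 0 → ∃ y ∈ S, ∃ t ∈ S, (X φ - 1) • y - (X φ * Y φ - 1) • t = (2 : ℤ) • x

section shift
variable {n' : ℕ} [Finite G]
  (d : (Fin n → MonoidAlgebra ℤ G) →ₗ[MonoidAlgebra ℤ G] (Fin n' → MonoidAlgebra ℤ G))
  (S : Submodule ℤ (Fin n → MonoidAlgebra ℤ G)) (S' : Submodule ℤ (Fin n' → MonoidAlgebra ℤ G))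

theorem shift01 (hφ : Function.Injective φ) (hS : ∀ x, x ∈ S ↔ d x = 0)
    (hS' : ∀ z, z ∈ S' ↔ ∃ x, d x = z) (h : K0 φ S') : K1 φ S := by
  intro x hx z hz h1 h2
  obtain ⟨w, hw1, hw2⟩ := F1 φ hφ x z h1 h2
  obtain ⟨y, hy, e1⟩ := h (d w) ((hS' _).2 ⟨w, rfl⟩)
    (by rw [← map_smul, hw1, ← hS]; exact hx) (by rw [← map_smul, hw2, ← hS]; exact hz)
  obtain ⟨y, rfl⟩ := (hS' _).1 hy
  refine ⟨(2 : ℤ) • w - NQ φ • y, ?_, ?_, ?_⟩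
  · rw [hS, map_sub, map_zsmul, map_smul, e1, sub_self]
  · rw [smul_sub, (c30 φ y).1, smul_comm, hw1, sub_zero]
  · rw [smul_sub, (c30 φ y).2, smul_comm, hw2, sub_zero]

theorem shift12 (hφ : Function.Injective φ) (hS : ∀ x, x ∈ S ↔ d x = 0)
    (hS' : ∀ z, z ∈ S' ↔ ∃ x, d x = z) (h : K1 φ S') : K2 φ S := by
  intro x hx z hz h1
  obtain ⟨w, v, hw1, hw2⟩ := F2 φ hφ x z h1
  obtain ⟨y, hy, e1, e2⟩ := h (d w) ((hS' _).2 ⟨w, rfl⟩) (d v) ((hS' _).2 ⟨v, rfl⟩)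
    (by rw [← map_smul, ← map_smul, ← map_sub, hw1, ← hS]; exact hx)
    (by rw [← map_smul, ← map_smul, ← map_add, hw2, ← hS]; exact hz)
  obtain ⟨y, rfl⟩ := (hS' _).1 hy
  refine ⟨(2 : ℤ) • w - (X φ - 1) • y, ?_, (2 : ℤ) • v - (Y φ - 1) • y, ?_, ?_, ?_⟩
  · rw [hS, map_sub, map_zsmul, map_smul, e1, sub_self]
  · rw [hS, map_sub, map_zsmul, map_smul, e2, sub_self]
  · rw [smul_sub, smul_sub, sub_sub_sub_comm, (c01 φ y).1, smul_comm _ (2 : ℤ) w,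
      smul_comm _ (2 : ℤ) v, ← smul_sub, hw1, sub_zero]
  · rw [smul_sub, smul_sub _ _ ((Y φ - 1) • y), sub_add_sub_comm, (c01 φ y).2,
      smul_comm _ (2 : ℤ) w, smul_comm _ (2 : ℤ) v, ← smul_add, hw2, sub_zero]

theorem shift23 (hφ : Function.Injective φ) (hS : ∀ x, x ∈ S ↔ d x = 0)
    (hS' : ∀ z, z ∈ S' ↔ ∃ x, d x = z) (h : K2 φ S') : K3 φ S := by
  intro x hx h1
  obtain ⟨w, v, hw1⟩ := F3 φ hφ x h1
  obtain ⟨y, hy, t, ht, e1, e2⟩ := h (d w) ((hS' _).2 ⟨w, rfl⟩) (d v) ((hS' _).2 ⟨v, rfl⟩)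
    (by rw [← map_smul, ← map_smul, ← map_sub, hw1, ← hS]; exact hx)
  obtain ⟨y, rfl⟩ := (hS' _).1 hy
  obtain ⟨t, rfl⟩ := (hS' _).1 ht
  refine ⟨(2 : ℤ) • w - ((1 + X φ) • y - (Y φ + 1) • t), ?_,
    (2 : ℤ) • v - ((X φ * Y φ + 1) • y + (X φ - 1) • t), ?_, ?_⟩
  · rw [hS, map_sub, map_zsmul, map_sub, map_smul, map_smul, e1, sub_self]
  · rw [hS, map_sub, map_zsmul, map_add, map_smul, map_smul, e2, sub_self]
  · rw [smul_sub (X φ - 1) ((2 : ℤ) • w), smul_sub _ ((2 : ℤ) • v), sub_sub_sub_comm, c12,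
      smul_comm _ (2 : ℤ) w, smul_comm _ (2 : ℤ) v, ← smul_sub, hw1, sub_zero]

theorem shift30 (hφ : Function.Injective φ) (hS : ∀ x, x ∈ S ↔ d x = 0)
    (hS' : ∀ z, z ∈ S' ↔ ∃ x, d x = z) (h : K3 φ S') : K0 φ S := by
  intro x hx h1 h2
  obtain ⟨w, hw1⟩ := F0 φ hφ x h1 h2
  obtain ⟨y, hy, t, ht, e1⟩ := h (d w) ((hS' _).2 ⟨w, rfl⟩)
    (by rw [← map_smul, hw1, ← hS]; exact hx)
  obtain ⟨y, rfl⟩ := (hS' _).1 hy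
  obtain ⟨t, rfl⟩ := (hS' _).1 ht
  refine ⟨(2 : ℤ) • w - ((X φ - 1) • y - (X φ * Y φ - 1) • t), ?_, ?_⟩
  · rw [hS, map_sub, map_zsmul, map_sub, map_smul, map_smul, e1, sub_self]
  · rw [smul_sub, c23, smul_comm, hw1, sub_zero]

end shift

theorem start3 [Finite G] (hφ : Function.Injective φ)
    (ε : (Fin n → MonoidAlgebra ℤ G) →ₗ[ℤ] ℤ)
    (hεG : ∀ (g : G) (x : Fin n → MonoidAlgebra ℤ G), ε (MonoidAlgebra.of ℤ G g • x) = ε x)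
    (hsurj : Function.Surjective ε) : K3 φ (LinearMap.ker ε) := by
  intro x hx h1
  rw [LinearMap.mem_ker] at hx
  obtain ⟨w, v, hw1⟩ := F3 φ hφ x h1
  obtain ⟨o, ho⟩ := hsurj 1
  have hX : ∀ z, ε (X φ • z) = ε z := fun z => hεG _ z
  have hY : ∀ z, ε (Y φ • z) = ε z := fun z => hεG _ z
  let y := ε v • o
  let t := (ε v - ε w) • o
  have hy : ε y = ε v := by rw [map_smul, ho, smul_eq_mul, mul_one]
  have ht : ε t = ε v - ε w := by rw [map_smul, ho, smul_eq_mul, mul_one]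
  refine ⟨(2 : ℤ) • w - ((1 + X φ) • y - (Y φ + 1) • t), ?_,
    (2 : ℤ) • v - ((X φ * Y φ + 1) • y + (X φ - 1) • t), ?_, ?_⟩
  · rw [LinearMap.mem_ker]
    simp only [map_sub, map_add, map_smul, add_smul, one_smul, hX, hY, hy, ht,
      smul_eq_mul]
    ring
  · rw [LinearMap.mem_ker]
    simp only [map_sub, map_add, map_smul, add_smul, sub_smul, one_smul, mul_smul, hX, hY, hy, ht,
      smul_eq_mul]
    ring
  · rw [smul_sub (X φ - 1) ((2 : ℤ) • w), smul_sub _ ((2 : ℤ) • v), sub_sub_sub_comm, c12,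
      smul_comm _ (2 : ℤ) w, smul_comm _ (2 : ℤ) v, ← smul_sub, hw1, sub_zero]

end ring

section ranks
open Module

theorem fixrank {R M M' : Type} [CommRing R] [IsDomain R] [IsPrincipalIdealRing R] [AddCommGroup M] [AddCommGroup M'] [Module R M] [Module R M']
    [Module.Free R M] [Module.Finite R M] [Module.Free R M'] [Module.Finite R M']
    (d : M →ₗ[R] M') (U : Submodule R M) (T : Submodule R M') (k : R) (hk : k ≠ 0)
    (h1 : ∀ x ∈ U, d x ∈ T) (h2 : ∀ t ∈ T, ∃ x ∈ U, d x = k • t) :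
    finrank R (LinearMap.ker d ⊓ U : Submodule R M) + finrank R T = finrank R U := by
  have h := Submodule.finrank_quotient_add_finrank (LinearMap.ker (d.domRestrict U))
  rw [LinearEquiv.finrank_eq (d.domRestrict U).quotKerEquivRange] at h
  rw [LinearMap.range_domRestrict, LinearMap.ker_domRestrict] at h
  have e1 : finrank R (LinearMap.ker d ⊓ U : Submodule R M) =
      finrank R (Submodule.comap U.subtype (LinearMap.ker d)) := by
    rw [inf_comm, ← Submodule.map_comap_subtype, Submodule.finrank_map_subtype_eq]
  have e2 : finrank R (Submodule.map d U) ≤ finrank R T := by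
    apply Submodule.finrank_mono
    rintro _ ⟨x, hx, rfl⟩
    exact h1 x hx
  have e3 : finrank R T ≤ finrank R (Submodule.map d U) := by
    let f : T →ₗ[R] Submodule.map d U := LinearMap.codRestrict _ (k • T.subtype) (by
      intro t
      obtain ⟨x, hx, e⟩ := h2 t t.2
      exact ⟨x, hx, e⟩)
    apply LinearMap.finrank_le_finrank_of_injective (f := f)
    intro t t' h
    have : k • (t : M') = k • (t' : M') := congrArg Subtype.val h
    exact Subtype.ext (smul_right_injective M' hk this)
  rw [e1]
  change _ + finrank R (Submodule.comap U.subtype (LinearMap.ker d)) = _ at h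
  omega

theorem rank_one {R M : Type} [CommRing R] [IsDomain R] [IsPrincipalIdealRing R] [AddCommGroup M] [Module R M] [Module.Free R M] [Module.Finite R M]
   (S U : Submodule R M) (h1 : finrank R S = 1) (h2 : finrank R (S ⊓ U : Submodule R M) = 1) :
   ∃ u ∈ S ⊓ U, u ≠ 0 ∧ ∀ s ∈ S, ∃ k : R, k ≠ 0 ∧ k • s ∈ U := by
  have : 0 < finrank R (S ⊓ U : Submodule R M) := by omega
  rw [Module.finrank_pos_iff] at this
  obtain ⟨u, hu⟩ := exists_ne (0 : (S ⊓ U : Submodule R M))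
  refine ⟨u, u.2, by simpa using hu, fun s hs => ?_⟩
  have : ¬ LinearIndependent R ![(⟨u, u.2.1⟩ : S), ⟨s, hs⟩] := by
    intro h
    have := h.fintype_card_le_finrank
    rw [h1] at this
    simp at this
  rw [LinearIndependent.pair_iff] at this
  push Not at this
  obtain ⟨a, b, h, hab⟩ := this
  have h' : a • (u : M) + b • s = 0 := congrArg Subtype.val h
  by_cases hb : b = 0
  · exfalso
    subst hb
    rw [zero_smul, add_zero, smul_eq_zero] at h'
    rcases h' with h' | h'
    · exact hab h' rfl
    · exact hu (by simpa using h')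
  · refine ⟨b, hb, ?_⟩
    rw [eq_neg_of_add_eq_zero_right h']
    exact U.neg_mem (U.smul_mem _ u.2.2)

end ranks

section final
open Module
variable {G : Type} [Group G] {n : ℕ}

/-- The fixed points of `G` in `ℤ[G]^n`. -/
def Fx (G : Type) [Group G] (n : ℕ) : Submodule ℤ (Fin n → MonoidAlgebra ℤ G) where
  carrier := {x | ∀ g : G, MonoidAlgebra.of ℤ G g • x = x}
  add_mem' := by
    intro x y hx hy g
    rw [smul_add, hx, hy]
  zero_mem' := by
    intro g
    rw [smul_zero]
  smul_mem' := by
    intro c x hx g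
    rw [smul_comm, hx]

/-- The norm element of `G`. -/
noncomputable def NG (G : Type) [Group G] [Fintype G] : MonoidAlgebra ℤ G :=
  ∑ g : G, MonoidAlgebra.of ℤ G g

theorem of_NG [Fintype G] (g : G) : MonoidAlgebra.of ℤ G g * NG G = NG G := by
  simp only [NG, Finset.mul_sum, ← map_mul]
  exact Fintype.sum_equiv (Equiv.mulLeft g) _ _ (fun _ => rfl)

theorem NG_mem [Fintype G] (x : Fin n → MonoidAlgebra ℤ G) : NG G • x ∈ Fx G n := by
  intro g
  rw [← mul_smul, of_NG]

theorem NG_smul [Fintype G] (x : Fin n → MonoidAlgebra ℤ G) (hx : x ∈ Fx G n) :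
    NG G • x = (Fintype.card G : ℤ) • x := by
  have h : ∀ g : G, MonoidAlgebra.of ℤ G g • x = x := hx
  rw [NG, Finset.sum_smul, Finset.sum_congr rfl (fun g _ => h g)]
  simp

theorem finrank_F {G : Type} {n : ℕ} [Fintype G] :
    finrank ℤ (Fin n → MonoidAlgebra ℤ G) = n * Fintype.card G := by
  rw [Module.finrank_pi_fintype]
  have : finrank ℤ (MonoidAlgebra ℤ G) = Fintype.card G := by
    rw [LinearEquiv.finrank_eq (MonoidAlgebra.coeffLinearEquiv ℤ), Module.finrank_finsupp_self]
  simp [this]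

theorem finrank_Fx [Finite G] : finrank ℤ (Fx G n) = n := by
  let L : Fx G n →ₗ[ℤ] (Fin n → ℤ) :=
    { toFun := fun x i => cf x.1 i 1
      map_add' := by
        intro x y
        funext i
        exact cf_add _ _ _ _
      map_smul' := by
        intro c x
        funext i
        exact cf_zsmul _ _ _ _ }
  have hL : Function.Bijective L := by
    constructor
    · intro x y h
      apply Subtype.ext
      apply cf_ext
      intro i u
      have hx := cf_of u x.1 i u
      have hy := cf_of u y.1 i u
      rw [x.2 u, inv_mul_cancel] at hx
      rw [y.2 u, inv_mul_cancel] at hy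
      rw [hx, hy]
      exact congrFun h i
    · intro c
      obtain ⟨m, hm⟩ := exists_cf (G := G) (fun i _ => c i)
      refine ⟨⟨m, fun g => cf_ext fun i u => ?_⟩, funext fun i => hm i 1⟩
      rw [cf_of, hm, hm]
  rw [LinearEquiv.finrank_eq (LinearEquiv.ofBijective L hL)]
  simp

theorem contra [Finite G] (φ : Q →* G) (S : Submodule ℤ (Fin n → MonoidAlgebra ℤ G))
    (hK : K0 φ S) (h1 : finrank ℤ S = 1)
    (h2 : finrank ℤ (S ⊓ Fx G n : Submodule ℤ (Fin n → MonoidAlgebra ℤ G)) = 1) : False := by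
  obtain ⟨u, hu, hu0, hS⟩ := rank_one S (Fx G n) h1 h2
  have htriv : ∀ s ∈ S, ∀ g : G, MonoidAlgebra.of ℤ G g • s = s := by
    intro s hs g
    obtain ⟨k, hk, hks⟩ := hS s hs
    have h : MonoidAlgebra.of ℤ G g • (k • s) = k • s := hks g
    rw [smul_comm] at h
    exact smul_right_injective _ hk h
  have hdiv : ∀ s ∈ S, ∃ y ∈ S, s = (4 : ℤ) • y := by
    intro s hs
    obtain ⟨y, hy, e⟩ := hK s hs
      (by rw [sub_smul, one_smul, X, htriv s hs, sub_self])
      (by rw [sub_smul, one_smul, Y, htriv s hs, sub_self])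
    refine ⟨y, hy, ?_⟩
    have : NQ φ • y = (8 : ℤ) • y := by
      rw [NQ, Finset.sum_smul, Finset.sum_congr rfl (fun g _ => htriv y hy (φ g))]
      rw [Finset.sum_const, Finset.card_univ, QuaternionGroup.card]
      norm_num [← Nat.cast_smul_eq_nsmul ℤ]
    rw [this] at e
    apply smul_right_injective _ (two_ne_zero (α := ℤ))
    change (2 : ℤ) • s = (2 : ℤ) • ((4 : ℤ) • y)
    rw [← e, smul_smul]
    norm_num
  have hz : ∀ N : ℕ, ∀ s ∈ S, ∀ i g, (cf s i g).natAbs ≤ N → cf s i g = 0 := by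
    intro N
    induction N with
    | zero => intro s _ i g h; omega
    | succ N ih =>
      intro s hs i g h
      obtain ⟨y, hy, rfl⟩ := hdiv s hs
      have e : cf ((4 : ℤ) • y) i g = 4 * cf y i g := cf_zsmul _ _ _ _
      rw [e] at h ⊢
      by_cases h0 : cf y i g = 0
      · rw [h0, mul_zero]
      · rw [ih y hy i g (by omega), mul_zero]
  apply hu0
  apply cf_ext
  intro i g
  rw [hz _ u hu.1 i g le_rfl, cf_zero]

end final

end Q8Res


/-- if a finite group `G` contains a subgroup isomorphic to the quaternion group
`Q₈`, then in any free resolution `⋯ → F₁ → F₀ → ℤ → 0` of the trivial module `ℤ` over `ℤ[G]`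
by finitely generated free modules `F_h = ℤ[G]^{f_h}`, the ranks satisfy `f_h ≥ 1` for
`h ≡ 0, 3 (mod 4)` and `f_h ≥ 2` for `h ≡ 1, 2 (mod 4)`.  Here `ε : F₀ → ℤ` is `ℤ`-linear and
`G`-equivariant for the trivial action on `ℤ` (i.e. `ℤ[G]`-linear), surjective, and the
sequence is exact. -/
theorem stmt18 (G : Type) [Group G] [Finite G]
    (H : Subgroup G) (hH : Nonempty (H ≃* QuaternionGroup 2))
    (f : ℕ → ℕ)
    (d : (h : ℕ) → (Fin (f (h + 1)) → MonoidAlgebra ℤ G)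
      →ₗ[MonoidAlgebra ℤ G] (Fin (f h) → MonoidAlgebra ℤ G))
    (ε : (Fin (f 0) → MonoidAlgebra ℤ G) →ₗ[ℤ] ℤ)
    (hεG : ∀ (g : G) (x : Fin (f 0) → MonoidAlgebra ℤ G),
      ε (MonoidAlgebra.of ℤ G g • x) = ε x)
    (hsurj : Function.Surjective ε)
    (hexact₀ : Function.Exact (d 0) ε)
    (hexact : ∀ h : ℕ, Function.Exact (d (h + 1)) (d h)) :
    ∀ h : ℕ, ((h % 4 = 0 ∨ h % 4 = 3) → 1 ≤ f h) ∧ ((h % 4 = 1 ∨ h % 4 = 2) → 2 ≤ f h) := by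
  classical
  obtain ⟨eH⟩ := hH
  let φ : Q8Res.Q →* G := H.subtype.comp eH.symm.toMonoidHom
  have hφ : Function.Injective φ := by
    intro x y h
    exact eH.symm.injective (Subtype.ext h)
  have : Fintype G := Fintype.ofFinite G
  have hcard : 8 ≤ Fintype.card G := by
    have := Fintype.card_le_of_injective φ hφ
    rwa [QuaternionGroup.card] at this
  obtain ⟨S, hS0, hSs⟩ : ∃ S : ∀ s, Submodule ℤ (Fin (f s) → MonoidAlgebra ℤ G),
      S 0 = LinearMap.ker ε ∧ ∀ s, S (s + 1) = LinearMap.ker ((d s).restrictScalars ℤ) :=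
    ⟨fun s => Nat.casesOn s (LinearMap.ker ε) (fun s => LinearMap.ker ((d s).restrictScalars ℤ)),
      rfl, fun _ => rfl⟩
  have hker : ∀ s x, x ∈ S (s + 1) ↔ d s x = 0 := by
    intro s x
    rw [hSs]
    rfl
  have hran : ∀ s z, z ∈ S s ↔ ∃ x, d s x = z := by
    intro s z
    cases s with
    | zero => rw [hS0]; exact hexact₀ z
    | succ s => rw [hker]; exact hexact s z
  -- the cohomological input
  have hK : ∀ k, Q8Res.K3 φ (S (4 * k)) ∧ Q8Res.K0 φ (S (4 * k + 1)) := by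
    have s0 : ∀ s, Q8Res.K3 φ (S s) → Q8Res.K0 φ (S (s + 1)) := fun s h =>
      Q8Res.shift30 φ (d s) _ _ hφ (hker s) (hran s) h
    intro k
    induction k with
    | zero =>
      have h3 : Q8Res.K3 φ (S 0) := by
        rw [hS0]
        exact Q8Res.start3 φ hφ ε hεG hsurj
      exact ⟨h3, s0 0 h3⟩
    | succ k ih =>
      have h1 := Q8Res.shift01 φ (d (4 * k + 1)) _ _ hφ (hker _) (hran _) ih.2
      have h2 := Q8Res.shift12 φ (d (4 * k + 1 + 1)) _ _ hφ (hker _) (hran _) h1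
      have h3 := Q8Res.shift23 φ (d (4 * k + 1 + 1 + 1)) _ _ hφ (hker _) (hran _) h2
      exact ⟨h3, s0 _ h3⟩
  -- the ranks
  let A : ℕ → ℤ := fun s => (Module.finrank ℤ (S s) : ℤ)
  let B : ℕ → ℤ := fun s => (Module.finrank ℤ
    (S s ⊓ Q8Res.Fx G (f s) : Submodule ℤ (Fin (f s) → MonoidAlgebra ℤ G)) : ℤ)
  let c : ℤ := Fintype.card G
  have hc : 8 ≤ c := by simp only [c]; exact_mod_cast hcard
  have hA0 : A 0 + 1 = f 0 * c := by
    have := Q8Res.fixrank ε ⊤ ⊤ 1 one_ne_zero (fun _ _ => trivial)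
      (fun t _ => by
        obtain ⟨x, hx⟩ := hsurj t
        exact ⟨x, trivial, by rw [hx, one_smul]⟩)
    rw [inf_top_eq, finrank_top, finrank_top, Q8Res.finrank_F, Module.finrank_self, ← hS0] at this
    simp only [A, B, c]
    exact_mod_cast this
  have hB0 : B 0 + 1 = f 0 := by
    have hN : ∀ x, ε (Q8Res.NG G • x) = c * ε x := by
      intro x
      rw [Q8Res.NG, Finset.sum_smul, map_sum, Finset.sum_congr rfl (fun g _ => hεG g x)]
      simp [c]
    have := Q8Res.fixrank ε (Q8Res.Fx G (f 0)) ⊤ c (by omega) (fun _ _ => trivial)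
      (fun t _ => by
        obtain ⟨x, hx⟩ := hsurj t
        exact ⟨_, Q8Res.NG_mem x, by rw [hN, hx, smul_eq_mul]⟩)
    rw [finrank_top, Q8Res.finrank_Fx, Module.finrank_self, ← hS0] at this
    simp only [A, B, c]
    exact_mod_cast this
  have hA1 : ∀ s, A (s + 1) + A s = f (s + 1) * c := by
    intro s
    have := Q8Res.fixrank ((d s).restrictScalars ℤ) ⊤ (S s) 1 one_ne_zero
      (fun x _ => (hran s _).2 ⟨x, rfl⟩)
      (fun t ht => by
        obtain ⟨x, hx⟩ := (hran s t).1 ht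
        exact ⟨x, trivial, by rw [one_smul]; exact hx⟩)
    rw [inf_top_eq, finrank_top, Q8Res.finrank_F, ← hSs] at this
    simp only [A, B, c]
    exact_mod_cast this
  have hB1 : ∀ s, B (s + 1) + B s = f (s + 1) := by
    intro s
    have := Q8Res.fixrank ((d s).restrictScalars ℤ) (Q8Res.Fx G (f (s + 1)))
      (S s ⊓ Q8Res.Fx G (f s)) c (by omega)
      (fun x hx => ⟨(hran s _).2 ⟨x, rfl⟩, fun g => by
        change MonoidAlgebra.of ℤ G g • d s x = d s x
        rw [← map_smul, hx g]⟩)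
      (fun t ht => by
        obtain ⟨x, hx⟩ := (hran s t).1 ht.1
        refine ⟨_, Q8Res.NG_mem x, ?_⟩
        change d s _ = _
        rw [map_smul, hx, Q8Res.NG_smul t ht.2])
    rw [Q8Res.finrank_Fx, ← hSs] at this
    simp only [A, B, c]
    exact_mod_cast this
  have hApos : ∀ s, 0 ≤ A s := fun s => Int.natCast_nonneg _
  have hBpos : ∀ s, 0 ≤ B s := fun s => Int.natCast_nonneg _
  have hAB : ∀ k, A (2 * k) + 1 = (B (2 * k) + 1) * c ∧
      A (2 * k + 1) - 1 = (B (2 * k + 1) - 1) * c := by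
    have st : ∀ k, A (2 * k) + 1 = (B (2 * k) + 1) * c →
        A (2 * k + 1) - 1 = (B (2 * k + 1) - 1) * c := by
      intro k h
      have h1 := hA1 (2 * k)
      rw [← hB1 (2 * k)] at h1
      linear_combination h1 - h
    intro k
    induction k with
    | zero =>
      have h0 : A 0 + 1 = (B 0 + 1) * c := by rw [hA0, hB0]
      exact ⟨h0, st 0 h0⟩
    | succ k ih =>
      have h0 : A (2 * (k + 1)) + 1 = (B (2 * (k + 1)) + 1) * c := by
        have h1 := hA1 (2 * k + 1)
        rw [← hB1 (2 * k + 1)] at h1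
        have e : 2 * (k + 1) = 2 * k + 1 + 1 := by ring
        rw [e]
        linear_combination h1 - ih.2
      exact ⟨h0, st _ h0⟩
  have hBodd : ∀ k, 1 ≤ B (2 * k + 1) := by
    intro k
    have h1 := (hAB k).2
    have h2 := hApos (2 * k + 1)
    by_contra h
    have : B (2 * k + 1) = 0 := by
      have := hBpos (2 * k + 1)
      omega
    rw [this] at h1
    omega
  have hB4 : ∀ k, 2 ≤ B (4 * k + 1) := by
    intro k
    by_contra h
    have h3 := hBodd (2 * k)
    have e : 2 * (2 * k) + 1 = 4 * k + 1 := by ring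
    have h1 := (hAB (2 * k)).2
    rw [e] at h1 h3
    have hb : B (4 * k + 1) = 1 := by omega
    rw [hb] at h1
    have ha : A (4 * k + 1) = 1 := by omega
    exact Q8Res.contra φ (S (4 * k + 1)) (hK k).2 (by simp only [A] at ha; exact_mod_cast ha)
      (by simp only [B] at hb; exact_mod_cast hb)
  intro h
  obtain ⟨k, hk⟩ : ∃ k, h = 4 * k ∨ h = 4 * k + 1 ∨ h = 4 * k + 2 ∨ h = 4 * k + 3 :=
    ⟨h / 4, by omega⟩
  rcases hk with rfl | rfl | rfl | rfl
  · refine ⟨fun _ => ?_, fun h => by omega⟩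
    rcases k with _ | k
    · have := hBpos 0
      change 1 ≤ f 0
      omega
    · have h1 := hB1 (4 * k + 3)
      have h2 := hBodd (2 * k + 1)
      have h3 := hBpos (4 * k + 3 + 1)
      have e : 2 * (2 * k + 1) + 1 = 4 * k + 3 := by ring
      have e' : 4 * (k + 1) = 4 * k + 3 + 1 := by ring
      rw [e] at h2
      rw [e']
      omega
  · refine ⟨fun h => by omega, fun _ => ?_⟩
    have h1 := hB1 (4 * k)
    have h2 := hB4 k
    have h3 := hBpos (4 * k)
    omega
  · refine ⟨fun h => by omega, fun _ => ?_⟩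
    have h1 := hB1 (4 * k + 1)
    have h2 := hB4 k
    have h3 := hBpos (4 * k + 1 + 1)
    change 2 ≤ f (4 * k + 1 + 1)
    omega
  · refine ⟨fun _ => ?_, fun h => by omega⟩
    have h1 := hB1 (4 * k + 2)
    have h2 := hBodd (2 * k + 1)
    have h3 := hBpos (4 * k + 2)
    have e : 2 * (2 * k + 1) + 1 = 4 * k + 2 + 1 := by ring
    rw [e] at h2
    change 1 ≤ f (4 * k + 2 + 1)
    omega
end
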